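/- arXiv:1405.1575 — 2 statements merged into one kernel-verified Lean document; each statement's English description precedes it below -/
import Mathlib

section
/- Let V be a primitive linear subspace of the n×p matrices over F2 of dimension 4 such that every nonzero matrix of V has rank 2. Then V is equivalent to V3(F2). -/
/-!
View the space `V` as a trilinear form `T : V × X × Y → 𝔽₂`, where `X` and `Y` are the spaces of
row and column vectors; everything below is symmetric in `X` and `Y`. Each nonzero `M` in `V` is a
rank two map `X → Dual Y`, and primitivity says that no nonzero vector lies in the range of all
of them.

The crucial fact (`Good.finrank_annV_le`) is that for every nonzero `x` the operators killing `x`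
form a space of dimension at most two. Otherwise all the values `M x` lie in `{0, φ}`; modulo `φ`,
the operators with `M x = φ` have rank at most one and form the complement of a hyperplane, while
some operator in the hyperplane keeps rank two. `finrank_range_ne_two_of_affine` shows that this
would force a four-dimensional space to consist of all `2 × 2` matrices, which is impossible.

Counting the pairs `(M, x)` with `M x = 0` in two ways then gives `dim X ≤ 4`, with equality in the
above bound for every nonzero `x` if `dim X = 4`, and for the members of a basis of `X` if
`dim X = 3`; also `dim X ≥ 3`, since otherwise all ranges agree. Dimension four is excluded by
`Good.no_triple`: three independent vectors whose annihilators in `Y` are pairwise disjoint planes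
would yield a covering of the sixteen elements of `V` by four planes.

If `dim X = dim Y = 3`, the basis `b` of `X` with `dim (annV T (b i)) = 2` and the generators `y i`
of the lines `annY T (b i)` turn `V` into a space of hollow matrices. The determinant of a hollow
`3 × 3` matrix is `m₀₁ m₁₂ m₂₀ + m₂₁ m₁₀ m₀₂`. As it vanishes on the four-dimensional space `V`,
neither triple of entries can be `(1, 1, 1)`, and a space of triples in which every coordinate
occurs and which avoids `(1, 1, 1)` satisfies `a + b + c = 0`. So `V` lies in `V3`, and the
dimensions agree.
-/

open Matrix

/-- Two linear subspaces of `n × p` matrices over `K` are *equivalent* when one is obtained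
from the other by multiplying on the left and on the right by fixed invertible matrices. -/
def MatEquiv (K : Type*) [Field K] {n p : ℕ}
    (V₁ V₂ : Submodule K (Matrix (Fin n) (Fin p) K)) : Prop :=
  ∃ (P : Matrix (Fin n) (Fin n) K) (Q : Matrix (Fin p) (Fin p) K),
    IsUnit P ∧ IsUnit Q ∧
      (V₂ : Set (Matrix (Fin n) (Fin p) K)) =
        (fun M => P * M * Q) '' (V₁ : Set (Matrix (Fin n) (Fin p) K))

/-- A linear subspace of matrices is *reduced* when no nonzero vector is annihilated by every
matrix of the space, and the column spaces of the matrices of the space together span the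
whole target space. -/
def Reduced (K : Type*) [Field K] {n p : ℕ}
    (V : Submodule K (Matrix (Fin n) (Fin p) K)) : Prop :=
  (∀ x : Fin p → K, (∀ M ∈ V, M.mulVec x = 0) → x = 0) ∧
  Submodule.span K {y : Fin n → K | ∃ M ∈ V, ∃ x : Fin p → K, M.mulVec x = y} = ⊤

/-- The *upper rank* of a linear subspace of matrices: the maximal rank of a matrix in it. -/
noncomputable def urk {K : Type*} [Field K] {n p : ℕ}
    (V : Submodule K (Matrix (Fin n) (Fin p) K)) : ℕ :=
  sSup (Matrix.rank '' (V : Set (Matrix (Fin n) (Fin p) K)))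

/-- The matrix obtained by deleting the last column. -/
def dropCol {K : Type*} [Field K] {n p : ℕ} (M : Matrix (Fin n) (Fin p) K) :
    Matrix (Fin n) (Fin (p - 1)) K :=
  M.submatrix id (Fin.castLE (Nat.sub_le p 1))

/-- The matrix obtained by deleting the last row. -/
def dropRow {K : Type*} [Field K] {n p : ℕ} (M : Matrix (Fin n) (Fin p) K) :
    Matrix (Fin (n - 1)) (Fin p) K :=
  M.submatrix (Fin.castLE (Nat.sub_le n 1)) id

/-- A linear subspace of matrices (of upper rank `r = urk V`) is *semi-primitive* when it is
reduced and it is not equivalent to a subspace `T` such that the space obtained by deleting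
the last column of each matrix of `T` has upper rank at most `r - 1`. -/
def SemiPrimitive (K : Type*) [Field K] {n p : ℕ}
    (V : Submodule K (Matrix (Fin n) (Fin p) K)) : Prop :=
  Reduced K V ∧
    ¬ ∃ T : Submodule K (Matrix (Fin n) (Fin p) K),
        MatEquiv K V T ∧ ∀ M ∈ T, (dropCol M).rank ≤ urk V - 1

/-- A linear subspace of matrices (of upper rank `r = urk V`) is *primitive* when it is
semi-primitive and it is not equivalent to a subspace `T` such that the space obtained by
deleting the last row of each matrix of `T` has upper rank at most `r - 1`. -/
def Primitive (K : Type*) [Field K] {n p : ℕ}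
    (V : Submodule K (Matrix (Fin n) (Fin p) K)) : Prop :=
  SemiPrimitive K V ∧
    ¬ ∃ T : Submodule K (Matrix (Fin n) (Fin p) K),
        MatEquiv K V T ∧ ∀ M ∈ T, (dropRow M).rank ≤ urk V - 1

/-- `V3(F2)`: the `3 × 3` matrices over `F2` with zero diagonal satisfying
`M 0 1 + M 1 2 + M 2 0 = 0` and `M 2 1 + M 1 0 + M 0 2 = 0`. -/
def V3 : Submodule (ZMod 2) (Matrix (Fin 3) (Fin 3) (ZMod 2)) where
  carrier := {M | (∀ i : Fin 3, M i i = 0) ∧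
    M 0 1 + M 1 2 + M 2 0 = 0 ∧ M 2 1 + M 1 0 + M 0 2 = 0}
  add_mem' := by
    rintro M N ⟨hM1, hM2, hM3⟩ ⟨hN1, hN2, hN3⟩
    refine ⟨fun i => by simp [Matrix.add_apply, hM1 i, hN1 i], ?_, ?_⟩
    · simp only [Matrix.add_apply]
      linear_combination hM2 + hN2
    · simp only [Matrix.add_apply]
      linear_combination hM3 + hN3
  zero_mem' := by
    refine ⟨fun i => rfl, ?_, ?_⟩ <;> simp
  smul_mem' := by
    rintro c M ⟨hM1, hM2, hM3⟩
    refine ⟨fun i => by simp [Matrix.smul_apply, hM1 i], ?_, ?_⟩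
    · simp only [Matrix.smul_apply, smul_eq_mul]
      linear_combination c * hM2
    · simp only [Matrix.smul_apply, smul_eq_mul]
      linear_combination c * hM3

/-- Transport of a subspace of `n × p` matrices to a subspace of `3 × 3` matrices along
equalities `n = 3` and `p = 3`. -/
def reindexSub {n p : ℕ} (hn : n = 3) (hp : p = 3)
    (V : Submodule (ZMod 2) (Matrix (Fin n) (Fin p) (ZMod 2))) :
    Submodule (ZMod 2) (Matrix (Fin 3) (Fin 3) (ZMod 2)) :=
  V.map (Matrix.reindexLinearEquiv (ZMod 2) (ZMod 2) (finCongr hn) (finCongr hp)).toLinearMap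

/-! ### Affine spaces of operators of rank at most one -/

/-- Local abbreviation for the two-element field. -/
local notation "K₂" => ZMod 2

theorem char_two_add_self {Z : Type*} [AddCommGroup Z] [Module K₂ Z] (z : Z) : z + z = 0 := by
  have h : (2 : K₂) • z = 0 := by rw [show (2 : K₂) = 0 from rfl, zero_smul]
  rwa [two_smul] at h

theorem scalar_cases (c : K₂) : c = 0 ∨ c = 1 := by
  revert c; decide

/-- Over the two-element field, a map of rank at most one takes at most one nonzero value. -/
theorem two_valued_of_finrank_range_le_one {X Z : Type*} [AddCommGroup X] [Module K₂ X]
    [AddCommGroup Z] [Module K₂ Z] [Module.Finite K₂ X] (g : X →ₗ[K₂] Z)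
    (h : Module.finrank K₂ (LinearMap.range g) ≤ 1) : ∃ w, ∀ v, g v = 0 ∨ g v = w := by
  obtain ⟨w, hw⟩ := finrank_le_one_iff.1 h
  refine ⟨w, fun v => ?_⟩
  obtain ⟨c, hc⟩ := hw ⟨g v, LinearMap.mem_range_self g v⟩
  have hc' : c • (w : Z) = g v := congrArg Subtype.val hc
  rcases scalar_cases c with rfl | rfl
  · left; rw [← hc', zero_smul]
  · right; rw [← hc', one_smul]

/-- Let `N` be a four-dimensional space of operators and suppose that all the operators
outside the hyperplane `ℓ = 0` have rank at most one. Then no operator in that hyperplane has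
rank two: otherwise two operators `u₁ ⊗ φ₁`, `u₂ ⊗ φ₂` outside the hyperplane confine the
whole space to the `2 × 2` matrices `⟨u₁, u₂⟩ ⊗ ⟨φ₁, φ₂⟩`, which it then fills; but
`!![1, 1; 1, 0]` and `!![0, 1; 1, 0]` are invertible and differ by `u₁ ⊗ φ₁`, so one of them
is outside the hyperplane. -/
theorem finrank_range_ne_two_of_affine {V X Z : Type*} [AddCommGroup V] [Module K₂ V]
    [AddCommGroup X] [Module K₂ X] [AddCommGroup Z] [Module K₂ Z] [Module.Finite K₂ Z]
    (hV : Module.finrank K₂ V = 4) (N : V →ₗ[K₂] X →ₗ[K₂] Z)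
    (hN : ∀ M, N M = 0 → M = 0) (ℓ : V →ₗ[K₂] K₂)
    (hℓ : ∀ M, ℓ M = 1 → ∃ w, ∀ v, N M v = 0 ∨ N M v = w)
    {A M₁ : V} (hA : ℓ A = 1) (hM₁ : ℓ M₁ = 0) :
    Module.finrank K₂ (LinearMap.range (N M₁)) ≠ 2 := by
  intro hr
  have two := fun z : Z => char_two_add_self z
  obtain ⟨u₁, hu₁⟩ := hℓ A hA
  obtain ⟨u₂, hu₂⟩ := hℓ (A + M₁) (by rw [map_add, hA, hM₁, add_zero])
  simp only [map_add, LinearMap.add_apply] at hu₂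
  have hval : ∀ v, N M₁ v = N A v + (N A v + N M₁ v) := by
    intro v; rw [← add_assoc, two, zero_add]
  set U : Submodule K₂ Z := Submodule.span K₂ {u₁, u₂} with hU
  have hu₁U : u₁ ∈ U := Submodule.subset_span (by simp)
  have hu₂U : u₂ ∈ U := Submodule.subset_span (by simp)
  have hrU : LinearMap.range (N M₁) ≤ U := by
    rintro _ ⟨v, rfl⟩
    rw [hval]
    refine U.add_mem ?_ ?_
    · rcases hu₁ v with h | h <;> rw [h]
      exacts [U.zero_mem, hu₁U]
    · rcases hu₂ v with h | h <;> rw [h]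
      exacts [U.zero_mem, hu₂U]
  have hUfin : Module.finrank K₂ U ≤ 2 := by
    classical
    have := finrank_span_finset_le_card (R := K₂) (M := Z) {u₁, u₂}
    refine le_trans (le_of_eq ?_) (this.trans Finset.card_le_two)
    rw [Set.finrank, hU, Finset.coe_pair]
  have hrU' : LinearMap.range (N M₁) = U :=
    Submodule.eq_of_le_of_finrank_le hrU (by omega)
  have hU2 : Module.finrank K₂ U = 2 := by rw [← hrU', hr]
  have hsingle : ∀ u : Z, U ≤ Submodule.span K₂ {u} → False := by
    intro u hu
    have h1 := Submodule.finrank_mono hu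
    have h2 : Module.finrank K₂ (Submodule.span K₂ {u}) ≤ 1 := by
      have h3 := finrank_span_finset_le_card (R := K₂) {u}
      rwa [Set.finrank, Finset.coe_singleton, Finset.card_singleton] at h3
    omega
  have hne₁ : u₁ ≠ 0 := by
    rintro rfl
    refine hsingle u₂ (Submodule.span_le.2 ?_)
    rintro z (rfl | rfl)
    · exact Submodule.zero_mem _
    · exact Submodule.mem_span_singleton_self _
  have hne₂ : u₂ ≠ 0 := by
    rintro rfl
    refine hsingle u₁ (Submodule.span_le.2 ?_)
    rintro z (rfl | rfl)
    · exact Submodule.mem_span_singleton_self _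
    · exact Submodule.zero_mem _
  have hne : u₁ ≠ u₂ := by
    rintro rfl
    refine hsingle u₁ (Submodule.span_le.2 ?_)
    rintro z (rfl | rfl) <;> exact Submodule.mem_span_singleton_self _
  -- `v₁`, `v₂` are dual to the two functionals.
  obtain ⟨v₁, hv₁⟩ : ∃ v, N M₁ v = u₁ := by
    have : u₁ ∈ LinearMap.range (N M₁) := by rw [hrU']; exact hu₁U
    exact this
  obtain ⟨v₂, hv₂⟩ : ∃ v, N M₁ v = u₂ := by
    have : u₂ ∈ LinearMap.range (N M₁) := by rw [hrU']; exact hu₂U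
    exact this
  have hA₁ : N A v₁ = u₁ := by
    have := hu₁ v₁; have := hu₂ v₁; have := two u₁; grind
  have hA₂ : N A v₂ = 0 := by
    have := hu₁ v₂; have := hu₂ v₂; have := two u₁; have := two u₂; grind
  -- Every operator outside the hyperplane has its values in `U` and kills the common kernel.
  have key : ∀ C, ℓ C = 1 → (∀ v, N C v ∈ U) ∧
      ∀ v, N A v = 0 → N M₁ v = 0 → N C v = 0 := by
    intro C hC
    obtain ⟨w₃, hw₃⟩ := hℓ C hC
    obtain ⟨w₄, hw₄⟩ := hℓ (C + M₁) (by rw [map_add, hC, hM₁, add_zero])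
    simp only [map_add, LinearMap.add_apply] at hw₄
    have a1 := hw₃ v₁
    have a2 := hw₃ v₂
    have b1 := hw₄ v₁
    have b2 := hw₄ v₂
    rw [hv₁] at b1
    rw [hv₂] at b2
    have t1 := two u₁
    have t2 := two u₂
    have t3 := two w₃
    have t4 := two w₄
    have hw : w₃ = u₁ ∨ w₃ = u₂ ∨ w₃ = u₁ + u₂ := by
      grind
    constructor
    · intro v
      rcases hw₃ v with h | h <;> rw [h]
      · exact U.zero_mem
      · rcases hw with rfl | rfl | rfl
        exacts [hu₁U, hu₂U, U.add_mem hu₁U hu₂U]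
    · intro v hAv hMv
      rcases hw₃ v with h | h
      · exact h
      · have b3 := hw₄ v
        rw [h, hMv, add_zero] at b3
        clear hw₃ hw₄ hu₁ hu₂ hval hN hℓ hrU hrU' hsingle
        rcases a1 with a1 | a1 <;> rcases a2 with a2 | a2 <;> rw [a1] at b1 <;>
          rw [a2] at b2 <;> (try simp only [zero_add] at b1 b2) <;> grind
  have key' : ∀ C, (∀ v, N C v ∈ U) ∧
      ∀ v, N A v = 0 → N M₁ v = 0 → N C v = 0 := by
    intro C
    rcases scalar_cases (ℓ C) with h | h
    · have h' := key (C + A) (by rw [map_add, h, hA, zero_add])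
      have h2 := key A hA
      simp only [map_add, LinearMap.add_apply] at h'
      constructor
      · intro v
        have := U.add_mem (h'.1 v) (h2.1 v)
        rwa [add_assoc, two, add_zero] at this
      · intro v x1 x2
        simpa [x1] using h'.2 v x1 x2
    · exact key C h
  let Ψ : V →ₗ[K₂] U × U :=
    { toFun := fun C => (⟨N C v₁, (key' C).1 v₁⟩, ⟨N C v₂, (key' C).1 v₂⟩)
      map_add' := by intro a b; ext <;> simp
      map_smul' := by intro a b; ext <;> simp }
  have hΨ : Function.Injective Ψ := by
    rw [← LinearMap.ker_eq_bot, LinearMap.ker_eq_bot']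
    intro C hC
    have e1 : N C v₁ = 0 := congrArg (fun z => (z.1 : Z)) hC
    have e2 : N C v₂ = 0 := congrArg (fun z => (z.2 : Z)) hC
    apply hN
    ext v
    -- Subtract from `v` its components along `v₁` and `v₂`.
    have h0 : ∀ v', N A v' = 0 → N M₁ v' = 0 → N C v' = 0 := (key' C).2
    have p1 := h0 v
    have p2 := h0 (v + v₁)
    have p3 := h0 (v + v₂)
    have p4 := h0 (v + v₁ + v₂)
    simp only [map_add, hA₁, hA₂, hv₁, hv₂, e1, e2, add_zero] at p2 p3 p4
    have t1 := two u₁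
    have t2 := two u₂
    have a1 := hu₁ v
    have a2 := hu₂ v
    rw [LinearMap.zero_apply]
    have a3 := hval v
    grind
  have hV' : Module.Finite K₂ V := Module.finite_of_finrank_pos (by omega)
  have hsurj : Function.Surjective Ψ :=
    (LinearMap.injective_iff_surjective_of_finrank_eq_finrank
      (by rw [hV, Module.finrank_prod, hU2])).1 hΨ
  obtain ⟨T, hT⟩ := hsurj (⟨u₁ + u₂, U.add_mem hu₁U hu₂U⟩, ⟨u₁, hu₁U⟩)
  have e1 : N T v₁ = u₁ + u₂ := congrArg (fun z => (z.1 : Z)) hT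
  have e2 : N T v₂ = u₁ := congrArg (fun z => (z.2 : Z)) hT
  have t1 := two u₁
  have t2 := two u₂
  rcases scalar_cases (ℓ T) with h | h
  · obtain ⟨w, hw⟩ := hℓ (T + A) (by rw [map_add, h, hA, zero_add])
    have x1 := hw v₁
    have x2 := hw v₂
    simp only [map_add, LinearMap.add_apply, e1, e2, hA₁, hA₂] at x1 x2
    grind
  · obtain ⟨w, hw⟩ := hℓ T h
    have x1 := hw v₁
    have x2 := hw v₂
    rw [e1] at x1
    rw [e2] at x2
    grind

/-! ### Trilinear reformulation -/

set_option linter.unusedSectionVars false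

section Tensor

variable {V X Y : Type*} [AddCommGroup V] [Module K₂ V] [AddCommGroup X] [Module K₂ X]
  [AddCommGroup Y] [Module K₂ Y]

/-- A primitive four-dimensional space of matrices of constant rank two, seen as a trilinear
form `T : V × X × Y → K₂`; the matrix attached to `M : V` is the bilinear form `T M` on
`X × Y`. The conditions are symmetric in `X` and `Y`. Since every nonzero `T M` has rank two,
primitivity says that no nonzero linear form on `Y` (resp. on `X`) lies in the range of all of
the nonzero maps `T M : X → Dual Y` (resp. `Y → Dual X`). -/
structure Good (T : V →ₗ[K₂] X →ₗ[K₂] Y →ₗ[K₂] K₂) : Prop where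
  dim : Module.finrank K₂ V = 4
  kerX : ∀ M, M ≠ 0 → Module.finrank K₂ (LinearMap.ker (T M)) + 2 = Module.finrank K₂ X
  kerY : ∀ M, M ≠ 0 → Module.finrank K₂ (LinearMap.ker (T M).flip) + 2 = Module.finrank K₂ Y
  primX : ∀ φ : Y →ₗ[K₂] K₂, φ ≠ 0 → ∃ M, M ≠ 0 ∧ ∀ x, T M x ≠ φ
  primY : ∀ φ : X →ₗ[K₂] K₂, φ ≠ 0 → ∃ M, M ≠ 0 ∧ ∀ y, (T M).flip y ≠ φ
  redX : ∀ x, x ≠ 0 → ∃ M, T M x ≠ 0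
  redY : ∀ y, y ≠ 0 → ∃ M, (T M).flip y ≠ 0

/-- The trilinear form with its last two variables exchanged (matrix transposition). -/
def swapT (T : V →ₗ[K₂] X →ₗ[K₂] Y →ₗ[K₂] K₂) : V →ₗ[K₂] Y →ₗ[K₂] X →ₗ[K₂] K₂ :=
  (LinearMap.lflip (R₀ := K₂)).toLinearMap ∘ₗ T

@[simp] theorem swapT_apply (T : V →ₗ[K₂] X →ₗ[K₂] Y →ₗ[K₂] K₂) (M : V) :
    swapT T M = (T M).flip := rfl

theorem Good.swap {T : V →ₗ[K₂] X →ₗ[K₂] Y →ₗ[K₂] K₂} (h : Good T) : Good (swapT T) where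
  dim := h.dim
  kerX := h.kerY
  kerY := h.kerX
  primX := h.primY
  primY := h.primX
  redX := h.redY
  redY := h.redX

/-- The space of all `M` with `M x = 0`. -/
def annV (T : V →ₗ[K₂] X →ₗ[K₂] Y →ₗ[K₂] K₂) (x : X) : Submodule K₂ V :=
  LinearMap.ker (T.flip x)

/-- The space of all `y` orthogonal to `M x` for every `M`. -/
def annY (T : V →ₗ[K₂] X →ₗ[K₂] Y →ₗ[K₂] K₂) (x : X) : Submodule K₂ Y :=
  Submodule.dualCoannihilator (LinearMap.range (T.flip x))

theorem mem_annV {T : V →ₗ[K₂] X →ₗ[K₂] Y →ₗ[K₂] K₂} {x : X} {M : V} :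
    M ∈ annV T x ↔ T M x = 0 := by
  simp [annV]

theorem mem_annY {T : V →ₗ[K₂] X →ₗ[K₂] Y →ₗ[K₂] K₂} {x : X} {y : Y} :
    y ∈ annY T x ↔ ∀ M, T M x y = 0 := by
  simp [annY, LinearMap.ext_iff]

theorem mem_annY_swap {T : V →ₗ[K₂] X →ₗ[K₂] Y →ₗ[K₂] K₂} {x : X} {y : Y} :
    x ∈ annY (swapT T) y ↔ y ∈ annY T x := by
  simp [mem_annY]

theorem Good.finite {T : V →ₗ[K₂] X →ₗ[K₂] Y →ₗ[K₂] K₂} (h : Good T) : Module.Finite K₂ V :=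
  Module.finite_of_finrank_pos (by rw [h.dim]; norm_num)

variable [Module.Finite K₂ X]

theorem Good.finrank_range {T : V →ₗ[K₂] X →ₗ[K₂] Y →ₗ[K₂] K₂} (h : Good T) {M : V}
    (hM : M ≠ 0) : Module.finrank K₂ (LinearMap.range (T M)) = 2 := by
  have h1 := LinearMap.finrank_range_add_finrank_ker (T M)
  have h2 := h.kerX M hM
  omega

variable [Module.Finite K₂ Y]

/-- Both sides compute the rank of the bilinear form `(M, y) ↦ T M x y`. -/
theorem Good.finrank_annY {T : V →ₗ[K₂] X →ₗ[K₂] Y →ₗ[K₂] K₂} (h : Good T) (x : X) :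
    Module.finrank K₂ (annY T x) + 4 = Module.finrank K₂ (annV T x) + Module.finrank K₂ Y := by
  have := h.finite
  have h1 : Module.finrank K₂ (LinearMap.range (T.flip x)) + Module.finrank K₂ (annY T x) =
      Module.finrank K₂ Y :=
    Subspace.finrank_add_finrank_dualCoannihilator_eq (LinearMap.range (T.flip x))
  have h2 := LinearMap.finrank_range_add_finrank_ker (T.flip x)
  rw [h.dim] at h2
  change _ + Module.finrank K₂ (annV T x) = _ at h2
  omega

/-- The vectors `M x`, for fixed `x ≠ 0`, span a space of dimension at least two. If they were
confined to `{0, φ}`, then modulo `φ` all the operators with `M x = φ` would have rank at most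
one, contradicting `finrank_range_ne_two_of_affine` because primitivity provides an operator
of rank two whose range misses `φ`. -/
theorem Good.finrank_annV_le {T : V →ₗ[K₂] X →ₗ[K₂] Y →ₗ[K₂] K₂} (h : Good T) {x : X}
    (hx : x ≠ 0) : Module.finrank K₂ (annV T x) ≤ 2 := by
  have := h.finite
  by_contra hcon
  have h2 := LinearMap.finrank_range_add_finrank_ker (T.flip x)
  rw [h.dim] at h2
  change _ + Module.finrank K₂ (annV T x) = _ at h2
  obtain ⟨φ, hφ⟩ := two_valued_of_finrank_range_le_one (T.flip x) (by omega)
  simp only [LinearMap.flip_apply] at hφ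
  obtain ⟨A, hA⟩ := h.redX x hx
  have hAφ : T A x = φ := (hφ A).resolve_left hA
  have hφ0 : φ ≠ 0 := by rw [← hAφ]; exact hA
  obtain ⟨y, hy⟩ : ∃ y, φ y = 1 := by
    by_contra! hc
    exact hφ0 (LinearMap.ext fun y => (scalar_cases (φ y)).resolve_right (hc y))
  obtain ⟨M₁, hM₁0, hM₁⟩ := h.primX φ hφ0
  let L : Submodule K₂ (Y →ₗ[K₂] K₂) := Submodule.span K₂ {φ}
  have memL : ∀ ψ, ψ ∈ L ↔ ψ = 0 ∨ ψ = φ := by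
    intro ψ
    rw [Submodule.mem_span_singleton]
    constructor
    · rintro ⟨c, rfl⟩
      rcases scalar_cases c with rfl | rfl <;> simp
    · rintro (rfl | rfl)
      exacts [⟨0, by simp⟩, ⟨1, by simp⟩]
  have hL : Module.finrank K₂ L = 1 := finrank_span_singleton hφ0
  let N : V →ₗ[K₂] X →ₗ[K₂] ((Y →ₗ[K₂] K₂) ⧸ L) := T.compr₂ L.mkQ
  have hNker : ∀ M v, N M v = 0 ↔ T M v ∈ L := by
    intro M v
    simp [N]
  let ℓ : V →ₗ[K₂] K₂ := (T.flip x).flip y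
  have hℓ1 : ∀ M, ℓ M = 1 → T M x = φ := by
    intro M hM
    refine (hφ M).resolve_left fun h0 => ?_
    simp [ℓ, h0] at hM
  refine finrank_range_ne_two_of_affine h.dim N ?_ ℓ ?_ (A := A) (M₁ := M₁) ?_ ?_ ?_
  · intro M hM
    by_contra hM0
    have hle : LinearMap.range (T M) ≤ L := by
      rintro _ ⟨v, rfl⟩
      rw [← hNker, hM, LinearMap.zero_apply]
    have h3 := Submodule.finrank_mono hle
    rw [h.finrank_range hM0, hL] at h3
    omega
  · intro M hM
    have hMx := hℓ1 M hM
    have hM0 : M ≠ 0 := by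
      rintro rfl
      simp at hM
    apply two_valued_of_finrank_range_le_one
    -- The kernel of `N M` contains that of `M` properly, because it also contains `x`.
    have hlt : LinearMap.ker (T M) < LinearMap.ker (N M) := by
      refine lt_of_le_of_ne ?_ ?_
      · intro v hv
        rw [LinearMap.mem_ker] at hv ⊢
        rw [hNker, hv]
        exact L.zero_mem
      · intro he
        have hx' : x ∈ LinearMap.ker (N M) := by
          rw [LinearMap.mem_ker, hNker, hMx, memL]
          exact Or.inr rfl
        rw [← he, LinearMap.mem_ker, hMx] at hx'
        exact hφ0 hx'
    have h3 := Submodule.finrank_lt_finrank_of_lt hlt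
    have h4 := LinearMap.finrank_range_add_finrank_ker (N M)
    have h5 := h.kerX M hM0
    omega
  · simp [ℓ, hAφ, hy]
  · rcases hφ M₁ with h0 | h0
    · simp [ℓ, h0]
    · exact absurd h0 (hM₁ x)
  · have he : LinearMap.ker (N M₁) = LinearMap.ker (T M₁) := by
      ext v
      rw [LinearMap.mem_ker, LinearMap.mem_ker, hNker, memL]
      simp [hM₁ v]
    have h4 := LinearMap.finrank_range_add_finrank_ker (N M₁)
    have h5 := h.kerX M₁ hM₁0
    rw [he] at h4
    omega

/-! ### Double counting of the pairs `(M, x)` with `M x = 0` -/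

theorem card_submodule {Z : Type*} [AddCommGroup Z] [Module K₂ Z] [Module.Finite K₂ Z] :
    Nat.card Z = 2 ^ Module.finrank K₂ Z := by
  rw [Module.natCard_eq_pow_finrank (K := K₂), Nat.card_zmod]

theorem Good.two_lt_finrank {T : V →ₗ[K₂] X →ₗ[K₂] Y →ₗ[K₂] K₂} (h : Good T) :
    2 < Module.finrank K₂ X := by
  have := h.finite
  obtain ⟨M, hM⟩ : ∃ M : V, M ≠ 0 := by
    have : Nontrivial V := Module.nontrivial_of_finrank_pos (R := K₂) (by rw [h.dim]; norm_num)
    exact exists_ne 0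
  have h1 := h.kerX M hM
  by_contra hcon
  have h2 : Module.finrank K₂ X = 2 := by omega
  -- In dimension two every nonzero `T M` reaches every linear form on `X`.
  have hnt : Nontrivial (X →ₗ[K₂] K₂) := by
    apply Module.nontrivial_of_finrank_pos (R := K₂)
    have : Module.finrank K₂ (X →ₗ[K₂] K₂) = Module.finrank K₂ X := Subspace.dual_finrank_eq
    omega
  obtain ⟨φ, hφ⟩ := exists_ne (0 : X →ₗ[K₂] K₂)
  obtain ⟨M', hM', hM''⟩ := h.primY φ hφ
  have h3 : LinearMap.range (T M').flip = ⊤ := by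
    apply Submodule.eq_top_of_finrank_eq
    exact ((h.swap.finrank_range (M := M') hM').trans h2.symm).trans
      Subspace.dual_finrank_eq.symm
  obtain ⟨y, hy⟩ : φ ∈ LinearMap.range (T M').flip := by rw [h3]; trivial
  exact hM'' y hy

open Classical in
/-- The pairs `(M, x)` with `M x = 0`, counted in two ways: the pairs with `x = 0` number `16`, and
those with `M = 0` and `M ≠ 0` number `4 * 2 ^ k` and `15 * 2 ^ k`. -/
theorem Good.count [Fintype X] {T : V →ₗ[K₂] X →ₗ[K₂] Y →ₗ[K₂] K₂} (h : Good T) {k : ℕ}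
    (hk : Module.finrank K₂ X = k + 2) :
    ∑ x ∈ Finset.univ.erase (0 : X), 2 ^ Module.finrank K₂ (annV T x) + 16 = 19 * 2 ^ k := by
  have := h.finite
  have : Finite V := Module.finite_of_finite K₂
  have : Fintype V := Fintype.ofFinite V
  have hcount : ∑ x : X, 2 ^ Module.finrank K₂ (annV T x) =
      ∑ M : V, 2 ^ Module.finrank K₂ (LinearMap.ker (T M)) := by
    have h1 := Finset.sum_card_bipartiteAbove_eq_sum_card_bipartiteBelow
      (s := (Finset.univ : Finset X)) (t := (Finset.univ : Finset V)) (fun x M => T M x = 0)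
    refine Eq.trans (Finset.sum_congr rfl fun x _ => ?_)
      (h1.trans (Finset.sum_congr rfl fun M _ => ?_))
    · rw [← card_submodule, Nat.card_eq_fintype_card, Fintype.card_subtype]
      simp only [mem_annV, Finset.bipartiteAbove]
    · rw [← card_submodule, Nat.card_eq_fintype_card, Fintype.card_subtype]
      simp only [LinearMap.mem_ker, Finset.bipartiteBelow]
  rw [← Finset.add_sum_erase _ _ (Finset.mem_univ (0 : X)),
    ← Finset.add_sum_erase _ _ (Finset.mem_univ (0 : V))] at hcount
  have h0X : annV T 0 = ⊤ := by ext M; simp [mem_annV]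
  have h0V : LinearMap.ker (T 0) = ⊤ := by ext x; simp
  rw [h0X, h0V, finrank_top, finrank_top, h.dim, hk] at hcount
  have h2 : ∑ M ∈ Finset.univ.erase (0 : V), 2 ^ Module.finrank K₂ (LinearMap.ker (T M)) =
      15 * 2 ^ k := by
    rw [Finset.sum_congr rfl (g := fun _ => 2 ^ k), Finset.sum_const,
      Finset.card_erase_of_mem (Finset.mem_univ _), Finset.card_univ, ← Nat.card_eq_fintype_card,
      card_submodule, h.dim]
    · rfl
    · intro M hM
      have := h.kerX M (Finset.ne_of_mem_erase hM)
      congr 1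
      omega
  rw [h2, pow_add] at hcount
  omega

open Classical in
theorem card_erase_zero [Fintype X] :
    (Finset.univ.erase (0 : X)).card = 2 ^ Module.finrank K₂ X - 1 := by
  rw [Finset.card_erase_of_mem (Finset.mem_univ _), Finset.card_univ, ← Nat.card_eq_fintype_card,
      card_submodule]

theorem Good.finrank_le_four {T : V →ₗ[K₂] X →ₗ[K₂] Y →ₗ[K₂] K₂} (h : Good T) :
    Module.finrank K₂ X ≤ 4 := by
  classical
  have : Finite X := Module.finite_of_finite K₂
  have : Fintype X := Fintype.ofFinite X
  obtain ⟨k, hk⟩ := Nat.exists_eq_add_of_lt h.two_lt_finrank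
  have hk' : Module.finrank K₂ X = (k + 1) + 2 := by omega
  have h1 := h.count hk'
  have h2 := Finset.sum_le_card_nsmul (Finset.univ.erase (0 : X))
    (fun x => 2 ^ Module.finrank K₂ (annV T x)) 4 (fun x hx =>
      (Nat.pow_le_pow_right (by norm_num) (h.finrank_annV_le (Finset.ne_of_mem_erase hx))))
  rw [card_erase_zero, hk', pow_add, smul_eq_mul] at h2
  have h3 : 2 ^ (k + 1) ≤ 4 := by omega
  have h4 : k + 1 ≤ 2 := by
    by_contra hc
    have := Nat.pow_le_pow_right (n := 2) (by norm_num) (show 3 ≤ k + 1 by omega)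
    omega
  omega

/-- In dimension four the bound on `annV` is attained everywhere. -/
theorem Good.finrank_annV_eq {T : V →ₗ[K₂] X →ₗ[K₂] Y →ₗ[K₂] K₂} (h : Good T)
    (hX : Module.finrank K₂ X = 4) {x : X} (hx : x ≠ 0) :
    Module.finrank K₂ (annV T x) = 2 := by
  classical
  have : Finite X := Module.finite_of_finite K₂
  have : Fintype X := Fintype.ofFinite X
  have h1 := h.count (k := 2) hX
  have hle : ∀ x ∈ Finset.univ.erase (0 : X), 2 ^ Module.finrank K₂ (annV T x) ≤ 4 := fun x hx =>
      (Nat.pow_le_pow_right (by norm_num) (h.finrank_annV_le (Finset.ne_of_mem_erase hx)))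
  have h2 : ∑ x ∈ Finset.univ.erase (0 : X), 2 ^ Module.finrank K₂ (annV T x) =
      ∑ x ∈ Finset.univ.erase (0 : X), 4 := by
    rw [Finset.sum_const, card_erase_zero, hX]
    simp only [smul_eq_mul]
    omega
  have h3 := (Finset.sum_eq_sum_iff_of_le hle).1 h2 x (by simp [hx])
  exact Nat.pow_right_injective le_rfl (h3.trans (by norm_num : 4 = 2 ^ 2))

/-- In dimension three the bound on `annV` is attained on a basis: the double count forces
equality for at least four nonzero vectors, which is too many for a plane. -/
theorem Good.exists_basis {T : V →ₗ[K₂] X →ₗ[K₂] Y →ₗ[K₂] K₂} (h : Good T)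
    (hX : Module.finrank K₂ X = 3) : ∃ b : Fin 3 → X, LinearIndependent K₂ b ∧
      ∀ i, Module.finrank K₂ (annV T (b i)) = 2 := by
  classical
  have : Finite X := Module.finite_of_finite K₂
  have : Fintype X := Fintype.ofFinite X
  have h1 := h.count (k := 1) hX
  let S : Finset X := (Finset.univ.erase (0 : X)).filter
    fun x => Module.finrank K₂ (annV T x) = 2
  have hS : 4 ≤ S.card := by
    have h2 : ∑ x ∈ Finset.univ.erase (0 : X), 2 ^ Module.finrank K₂ (annV T x) ≤
        ∑ x ∈ Finset.univ.erase (0 : X),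
          (2 + if Module.finrank K₂ (annV T x) = 2 then 2 else 0) := by
      refine Finset.sum_le_sum fun x hx => ?_
      have hx2 := h.finrank_annV_le (Finset.ne_of_mem_erase hx)
      interval_cases Module.finrank K₂ (annV T x) <;> norm_num
    rw [Finset.sum_add_distrib, ← Finset.sum_filter, Finset.sum_const, Finset.sum_const,
      card_erase_zero, hX] at h2
    simp only [smul_eq_mul] at h2
    change _ ≤ _ + S.card * 2 at h2
    omega
  have hspan : Module.finrank K₂ (Submodule.span K₂ (S : Set X)) = 3 := by
    have hle := Submodule.finrank_le (Submodule.span K₂ (S : Set X))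
    by_contra hne
    have hcard : Nat.card (Submodule.span K₂ (S : Set X)) ≤ 4 := by
      rw [card_submodule]
      exact Nat.pow_le_pow_right (n := 2) (j := 2) (by norm_num) (by omega)
    rw [Nat.card_eq_fintype_card, Fintype.card_subtype] at hcard
    have hsub : insert 0 S ⊆ Finset.univ.filter (· ∈ Submodule.span K₂ (S : Set X)) := by
      intro x hx
      rcases Finset.mem_insert.1 hx with rfl | hx
      · simp
      · simpa using Submodule.subset_span hx
    have h3 := Finset.card_le_card hsub
    rw [Finset.card_insert_of_notMem (by simp [S])] at h3
    omega
  obtain ⟨b, hb, -, hli⟩ := Submodule.exists_fun_fin_finrank_span_eq K₂ (S : Set X)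
  exact ⟨b ∘ Fin.cast hspan.symm, hli.comp _ (Fin.cast_injective _),
    fun i => (Finset.mem_filter.1 (hb (Fin.cast hspan.symm i))).2⟩

/-! ### Excluding dimension four -/

theorem eq_of_finrank_le_one {Z : Type*} [AddCommGroup Z] [Module K₂ Z] [Module.Finite K₂ Z]
    {S : Submodule K₂ Z} (hS : Module.finrank K₂ S ≤ 1) {a b : Z} (ha : a ∈ S) (hb : b ∈ S)
    (ha0 : a ≠ 0) (hb0 : b ≠ 0) : a = b := by
  obtain ⟨w, hw⟩ := two_valued_of_finrank_range_le_one S.subtype (by rwa [Submodule.range_subtype])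
  have h1 : a = w := (hw ⟨a, ha⟩).resolve_left ha0
  have h2 : b = w := (hw ⟨b, hb⟩).resolve_left hb0
  rw [h1, h2]

theorem linearIndependent_triple {Z : Type*} [AddCommGroup Z] [Module K₂ Z] {a b c : Z}
    (ha : a ≠ 0) (hb : b ≠ 0) (hc : c ≠ 0) (hab : a ≠ b) (hac : a ≠ c) (hbc : b ≠ c)
    (habc : a + b ≠ c) : LinearIndependent K₂ ![a, b, c] := by
  have heq : ∀ {z w : Z}, z + w = 0 → z = w := by
    intro z w hz
    rw [eq_neg_of_add_eq_zero_left hz, neg_eq_of_add_eq_zero_left (char_two_add_self w)]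
  rw [Fintype.linearIndependent_iff]
  intro g hg
  simp only [Fin.sum_univ_three, Matrix.cons_val_zero, Matrix.cons_val_one,
    Matrix.cons_val] at hg
  have : g 0 = 0 ∧ g 1 = 0 ∧ g 2 = 0 := by
    rcases scalar_cases (g 0) with h0 | h0 <;> rcases scalar_cases (g 1) with h1 | h1 <;>
      rcases scalar_cases (g 2) with h2 | h2 <;>
      simp only [h0, h1, h2, zero_smul, one_smul, zero_add, add_zero] at hg
    · exact ⟨h0, h1, h2⟩
    · exact absurd hg hc
    · exact absurd hg hb
    · exact absurd (heq hg) hbc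
    · exact absurd hg ha
    · exact absurd (heq hg) hac
    · exact absurd (heq hg) hab
    · exact absurd (heq hg) habc
  intro i
  fin_cases i
  exacts [this.1, this.2.1, this.2.2]

/-- If `dim Y = 4`, there are no three independent `f i` with `annV T (f i)` of dimension two
and pairwise independent planes `annY T (f i)`. Since `T M` has rank two, some nontrivial
combination of the forms `T M (f i)` vanishes. A combination of exactly two of them vanishes on
the sum of two complementary planes, so `V` is covered by the four planes `annV T (f i)` and
`annV T (f 0 + f 1 + f 2)`, which have at most `13` elements in all. -/
theorem Good.no_triple {T : V →ₗ[K₂] X →ₗ[K₂] Y →ₗ[K₂] K₂} (h : Good T)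
    (hY : Module.finrank K₂ Y = 4) {f : Fin 3 → X} (hf : LinearIndependent K₂ f)
    (hann : ∀ i, Module.finrank K₂ (annV T (f i)) = 2)
    (hdis : ∀ i j, i ≠ j → Disjoint (annY T (f i)) (annY T (f j))) : False := by
  classical
  have := h.finite
  have : Finite V := Module.finite_of_finite K₂
  have : Fintype V := Fintype.ofFinite V
  have hpair : ∀ i j, i ≠ j → ∀ M, T M (f i) + T M (f j) = 0 → T M (f i) = 0 := by
    intro i j hij M hM
    have htop : annY T (f i) ⊔ annY T (f j) = ⊤ := by
      apply Submodule.eq_top_of_finrank_eq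
      have h1 := Submodule.finrank_sup_add_finrank_inf_eq (annY T (f i)) (annY T (f j))
      rw [(hdis i j hij).eq_bot, finrank_bot] at h1
      have h2 := h.finrank_annY (f i)
      have h3 := h.finrank_annY (f j)
      have h4 := hann i
      have h5 := hann j
      omega
    have hle : annY T (f i) ⊔ annY T (f j) ≤ LinearMap.ker (T M (f i)) := by
      refine sup_le ?_ ?_
      · intro y hy
        exact mem_annY.1 hy M
      · intro y hy
        have h1 := mem_annY.1 hy M
        have h2 : T M (f i) y + T M (f j) y = 0 := by
          rw [← LinearMap.add_apply, hM, LinearMap.zero_apply]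
        rw [h1, add_zero] at h2
        exact h2
    rw [htop, top_le_iff, LinearMap.ker_eq_top] at hle
    exact hle
  have hcover : ∀ M, ∃ i : Fin 4, M ∈ annV T (![f 0, f 1, f 2, f 0 + f 1 + f 2] i) := by
    intro M
    rcases eq_or_ne M 0 with rfl | hM
    · exact ⟨0, Submodule.zero_mem _⟩
    have hdep : ¬ LinearIndependent K₂ (fun i => T M (f i)) := by
      intro hli
      have h1 := finrank_span_eq_card hli
      have h2 : Submodule.span K₂ (Set.range fun i => T M (f i)) ≤ LinearMap.range (T M) := by
        rw [Submodule.span_le]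
        rintro _ ⟨i, rfl⟩
        exact LinearMap.mem_range_self _ _
      have h3 := Submodule.finrank_mono h2
      rw [h1, h.finrank_range hM, Fintype.card_fin] at h3
      omega
    obtain ⟨g, hg, i, hi⟩ := Fintype.not_linearIndependent_iff.1 hdep
    rw [Fin.sum_univ_three] at hg
    rcases scalar_cases (g 0) with h0 | h0 <;> rcases scalar_cases (g 1) with h1 | h1 <;>
      rcases scalar_cases (g 2) with h2 | h2 <;>
      simp only [h0, h1, h2, zero_smul, one_smul, zero_add, add_zero] at hg
    · fin_cases i
      exacts [absurd h0 hi, absurd h1 hi, absurd h2 hi]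
    · exact ⟨2, mem_annV.2 hg⟩
    · exact ⟨1, mem_annV.2 hg⟩
    · exact ⟨1, mem_annV.2 (hpair 1 2 (by decide) M hg)⟩
    · exact ⟨0, mem_annV.2 hg⟩
    · exact ⟨0, mem_annV.2 (hpair 0 2 (by decide) M hg)⟩
    · exact ⟨0, mem_annV.2 (hpair 0 1 (by decide) M hg)⟩
    · refine ⟨3, mem_annV.2 ?_⟩
      change T M (f 0 + f 1 + f 2) = 0
      rw [map_add, map_add, hg]
  have hsum : f 0 + f 1 + f 2 ≠ 0 := by
    intro h0
    have h1 := Fintype.linearIndependent_iff.1 hf (fun _ => 1)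
      (by simpa [Fin.sum_univ_three] using h0) 0
    exact one_ne_zero h1
  have hfin : ∀ i : Fin 4,
      Module.finrank K₂ (annV T (![f 0, f 1, f 2, f 0 + f 1 + f 2] i)) ≤ 2 := by
    intro i
    fin_cases i
    exacts [(hann 0).le, (hann 1).le, (hann 2).le, h.finrank_annV_le hsum]
  have hsub : Finset.univ.erase (0 : V) ⊆ Finset.univ.biUnion fun i : Fin 4 =>
      (Finset.univ.filter (· ∈ annV T (![f 0, f 1, f 2, f 0 + f 1 + f 2] i))).erase 0 := by
    intro M hM
    obtain ⟨i, hi⟩ := hcover M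
    rw [Finset.mem_biUnion]
    exact ⟨i, Finset.mem_univ _, Finset.mem_erase.2
      ⟨Finset.ne_of_mem_erase hM, Finset.mem_filter.2 ⟨Finset.mem_univ _, hi⟩⟩⟩
  have hc := (Finset.card_le_card hsub).trans
    (Finset.card_biUnion_le_card_mul _ _ 3 (fun i _ => ?_))
  · rw [card_erase_zero, h.dim, Finset.card_univ, Fintype.card_fin] at hc
    omega
  · rw [Finset.card_erase_of_mem (by simp), ← Fintype.card_subtype,
      ← Nat.card_eq_fintype_card]
    have h1 : Nat.card (annV T (![f 0, f 1, f 2, f 0 + f 1 + f 2] i)) ≤ 2 ^ 2 := by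
      rw [card_submodule]
      exact Nat.pow_le_pow_right (by norm_num) (hfin i)
    exact Nat.sub_le_sub_right h1 1

theorem Good.not_three_four {T : V →ₗ[K₂] X →ₗ[K₂] Y →ₗ[K₂] K₂} (h : Good T)
    (hX : Module.finrank K₂ X = 3) (hY : Module.finrank K₂ Y = 4) : False := by
  obtain ⟨b, hb, hann⟩ := h.exists_basis hX
  refine h.no_triple hY hb hann fun i j hij => ?_
  rw [Submodule.disjoint_def]
  intro y hy1 hy2
  by_contra hy0
  have h1 := h.swap.finrank_annY y
  have h2 := h.swap.finrank_annV_le hy0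
  exact hij (hb.injective (eq_of_finrank_le_one (by omega) (mem_annY_swap.2 hy1)
    (mem_annY_swap.2 hy2) (hb.ne_zero i) (hb.ne_zero j)))

open Classical in
theorem card_filter_mem {Z : Type*} [AddCommGroup Z] [Module K₂ Z] [Module.Finite K₂ Z]
    [Fintype Z] (S : Submodule K₂ Z) (hS : Module.finrank K₂ S = 2) :
    (Finset.univ.filter (· ∈ S)).card = 4 := by
  rw [← Fintype.card_subtype, ← Nat.card_eq_fintype_card]
  exact card_submodule.trans (by rw [hS]; norm_num)

/-- When `dim X = dim Y = 4`, all the spaces `annV` and `annY` are planes. Call `f` and `g`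
adjacent when `annY T f` meets `annY T g`; a vector has at most six neighbours. If no three
independent vectors were pairwise non-adjacent, then for `k` not adjacent to `f` the vectors
not adjacent to `f`, other than `k` and `f + k`, would make up all the neighbours of `k`, and
`k`, `f + k` together with any neighbour `a` of `f` would be such a triple. -/
theorem Good.not_four_four {T : V →ₗ[K₂] X →ₗ[K₂] Y →ₗ[K₂] K₂} (h : Good T)
    (hX : Module.finrank K₂ X = 4) (hY : Module.finrank K₂ Y = 4) : False := by
  classical
  have : Finite X := Module.finite_of_finite K₂
  have : Fintype X := Fintype.ofFinite X
  have : Finite Y := Module.finite_of_finite K₂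
  have : Fintype Y := Fintype.ofFinite Y
  have hA : ∀ f, f ≠ 0 → Module.finrank K₂ (annY T f) = 2 := by
    intro f hf
    have h1 := h.finrank_annY f
    have h2 := h.finrank_annV_eq hX hf
    omega
  have hB : ∀ y, y ≠ 0 → Module.finrank K₂ (annY (swapT T) y) = 2 := by
    intro y hy
    have h1 := h.swap.finrank_annY y
    have h2 := h.swap.finrank_annV_eq hY hy
    omega
  let adj : X → X → Prop := fun f g => ∃ y, y ≠ 0 ∧ y ∈ annY T f ∧ y ∈ annY T g
  have adj_symm : ∀ {f g}, adj f g → adj g f := fun ⟨y, h0, h1, h2⟩ => ⟨y, h0, h2, h1⟩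
  have adj_add : ∀ {f g}, adj f g → adj f (f + g) := by
    rintro f g ⟨y, h0, h1, h2⟩
    exact ⟨y, h0, h1, mem_annY_swap.1
      (Submodule.add_mem _ (mem_annY_swap.2 h1) (mem_annY_swap.2 h2))⟩
  have add_add : ∀ f g : X, f + (f + g) = g := by
    intro f g
    rw [← add_assoc, char_two_add_self, zero_add]
  let nb : X → Finset X := fun f => Finset.univ.filter fun g => g ≠ 0 ∧ g ≠ f ∧ adj f g
  have nb_le : ∀ f, f ≠ 0 → (nb f).card ≤ 6 := by
    intro f hf
    have hsub : nb f ⊆ ((Finset.univ.filter (· ∈ annY T f)).erase 0).biUnion fun y =>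
        ((Finset.univ.filter (· ∈ annY (swapT T) y)).erase 0).erase f := by
      intro g hg
      obtain ⟨-, hg0, hgf, y, hy0, hyf, hyg⟩ := Finset.mem_filter.1 hg
      rw [Finset.mem_biUnion]
      refine ⟨y, by simp [hy0, hyf], ?_⟩
      simp [hg0, hgf, mem_annY_swap, hyg]
    refine (Finset.card_le_card hsub).trans
      ((Finset.card_biUnion_le_card_mul _ _ 2 fun y hy => ?_).trans ?_)
    · obtain ⟨hy0, hy⟩ := Finset.mem_erase.1 hy
      have hy := (Finset.mem_filter.1 hy).2
      rw [Finset.card_erase_of_mem (by simp [hf, mem_annY_swap, hy]),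
        Finset.card_erase_of_mem (by simp), card_filter_mem _ (hB y hy0)]
    · rw [Finset.card_erase_of_mem (by simp), card_filter_mem _ (hA f hf)]
  have nt : ∀ a b c : X, a ≠ 0 → b ≠ 0 → c ≠ 0 → a ≠ b → a ≠ c → b ≠ c → a + b ≠ c →
      ¬ adj a b → ¬ adj a c → adj b c := by
    intro a b c ha hb hc hab hac hbc habc nab nac
    by_contra nbc
    have hd : ∀ {f g}, ¬ adj f g → Disjoint (annY T f) (annY T g) := by
      intro f g hfg
      rw [Submodule.disjoint_def]
      intro y h1 h2
      by_contra h0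
      exact hfg ⟨y, h0, h1, h2⟩
    refine h.no_triple hY (linearIndependent_triple ha hb hc hab hac hbc habc) ?_ ?_
    · intro i
      fin_cases i
      exacts [h.finrank_annV_eq hX ha, h.finrank_annV_eq hX hb, h.finrank_annV_eq hX hc]
    · intro i j hij
      fin_cases i <;> fin_cases j <;> first | exact absurd rfl hij | skip
      exacts [hd nab, hd nac, (hd nab).symm, hd nbc, (hd nac).symm, (hd nbc).symm]
  have hXnt : Nontrivial X := Module.nontrivial_of_finrank_pos (R := K₂) (by omega)
  obtain ⟨f, hf⟩ := exists_ne (0 : X)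
  let N : Finset X := Finset.univ.filter fun g => g ≠ 0 ∧ g ≠ f ∧ ¬ adj f g
  have hN : 8 ≤ N.card := by
    have hsub : Finset.univ.erase (0 : X) ⊆ insert f (nb f ∪ N) := by
      intro g hg
      have hg0 := Finset.ne_of_mem_erase hg
      by_cases hgf : g = f
      · simp [hgf]
      · by_cases ha : adj f g
        · simp [nb, hg0, hgf, ha]
        · simp [N, hg0, hgf, ha]
    have h1 := Finset.card_le_card hsub
    have h2 := Finset.card_insert_le f (nb f ∪ N)
    have h3 := Finset.card_union_le (nb f) N
    have h4 := nb_le f hf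
    rw [card_erase_zero, hX] at h1
    omega
  have memN : ∀ g, g ∈ N ↔ g ≠ 0 ∧ g ≠ f ∧ ¬ adj f g := by simp [N]
  have N_add : ∀ g, g ∈ N → f + g ∈ N := by
    intro g hg
    obtain ⟨h0, h1, h2⟩ := (memN g).1 hg
    refine (memN _).2 ⟨?_, ?_, ?_⟩
    · intro he
      exact h1 (by rw [← add_add f g, he, add_zero])
    · simpa using h0
    · intro ha
      exact h2 (by simpa [add_add] using adj_add ha)
  -- For `k` in `N`, the set `N` minus two elements consists of neighbours of `k`.
  have nbN : ∀ k ∈ N, nb k ⊆ N := by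
    intro k hk
    obtain ⟨h0, h1, h2⟩ := (memN k).1 hk
    have hsub : (N.erase k).erase (f + k) ⊆ nb k := by
      intro g hg
      obtain ⟨g1, hg⟩ := Finset.mem_erase.1 hg
      obtain ⟨g2, hg⟩ := Finset.mem_erase.1 hg
      obtain ⟨g3, g4, g5⟩ := (memN g).1 hg
      exact Finset.mem_filter.2 ⟨Finset.mem_univ _, g3, g2,
        nt f k g hf h0 g3 h1.symm g4.symm g2.symm g1.symm h2 g5⟩
    have hfk : f + k ≠ k := by simpa using hf
    have hc : ((N.erase k).erase (f + k)).card = N.card - 1 - 1 := by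
      rw [Finset.card_erase_of_mem (Finset.mem_erase.2 ⟨hfk, N_add k hk⟩),
        Finset.card_erase_of_mem hk]
    have h3 := nb_le k h0
    rw [← Finset.eq_of_subset_of_card_le hsub (by omega)]
    exact (Finset.erase_subset _ _).trans (Finset.erase_subset _ _)
  -- A neighbour `a` of `f`: take `y` in `annY T f` and another vector in the plane of `y`.
  obtain ⟨a, ha0, haf, hfa⟩ : ∃ a, a ≠ 0 ∧ a ≠ f ∧ adj f a := by
    obtain ⟨y, hy, hy0⟩ := Submodule.exists_mem_ne_zero_of_ne_bot (p := annY T f) (by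
      intro hb
      have := hA f hf
      rw [hb, finrank_bot] at this
      omega)
    by_contra! hcon
    have hsub : Finset.univ.filter (· ∈ annY (swapT T) y) ⊆ {0, f} := by
      intro a ha
      have ha := (Finset.mem_filter.1 ha).2
      by_contra hn
      simp only [Finset.mem_insert, Finset.mem_singleton, not_or] at hn
      exact hcon a hn.1 hn.2 ⟨y, hy0, hy, mem_annY_swap.1 ha⟩
    have h1 := (Finset.card_le_card hsub).trans Finset.card_le_two
    rw [card_filter_mem _ (hB y hy0)] at h1
    omega
  obtain ⟨k, hk⟩ := Finset.card_pos.1 (show 0 < N.card by omega)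
  have haN : a ∉ N := fun hh => ((memN a).1 hh).2.2 hfa
  have hna : ∀ k ∈ N, ¬ adj k a := by
    intro k hk hka
    exact haN (nbN k hk (Finset.mem_filter.2
      ⟨Finset.mem_univ _, ha0, fun he => haN (he ▸ hk), hka⟩))
  have hk' := N_add k hk
  obtain ⟨k0, k1, k2⟩ := (memN k).1 hk
  refine hna _ hk' (nt k (f + k) a k0 ((memN _).1 hk').1 ha0 ?_ ?_ ?_ ?_ ?_ (hna k hk))
  · simpa using hf
  · exact fun he => haN (he ▸ hk)
  · exact fun he => haN (he ▸ hk')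
  · rw [add_comm f k, add_add]
    exact haf.symm
  · intro hh
    have := adj_add hh
    rw [add_comm f k, add_add] at this
    exact k2 (adj_symm this)

/-! ### The three-dimensional case -/

/-- When `dim X = dim Y = 3`, suitable bases make all the matrices hollow, with no entry off
the diagonal vanishing identically: `y i` spans the line `annY T (b i)` for `b` as in
`Good.exists_basis`. -/
theorem Good.hollow {T : V →ₗ[K₂] X →ₗ[K₂] Y →ₗ[K₂] K₂} (h : Good T)
    (hX : Module.finrank K₂ X = 3) (hY : Module.finrank K₂ Y = 3) :
    ∃ (b : Fin 3 → X) (y : Fin 3 → Y), LinearIndependent K₂ b ∧ LinearIndependent K₂ y ∧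
      (∀ M i, T M (b i) (y i) = 0) ∧ ∀ i j, i ≠ j → ∃ M, T M (b i) (y j) ≠ 0 := by
  have := h.finite
  obtain ⟨b, hb, hann⟩ := h.exists_basis hX
  have hex : ∀ i, ∃ y, y ∈ annY T (b i) ∧ y ≠ 0 := by
    intro i
    refine Submodule.exists_mem_ne_zero_of_ne_bot fun hbot => ?_
    have h1 := h.finrank_annY (b i)
    rw [hbot, finrank_bot, hann, hY] at h1
    omega
  choose y hy hy0 using hex
  have hoff : ∀ i j, i ≠ j → ∃ M, T M (b i) (y j) ≠ 0 := by
    intro i j hij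
    by_contra! hcon
    have h1 := h.swap.finrank_annY (y j)
    have h2 := h.swap.finrank_annV_le (hy0 j)
    exact hij (hb.injective (eq_of_finrank_le_one (by omega)
      (mem_annY_swap.2 (mem_annY.2 hcon)) (mem_annY_swap.2 (hy j)) (hb.ne_zero i)
      (hb.ne_zero j)))
  have hdiag : ∀ M i, T M (b i) (y i) = 0 := fun M i => mem_annY.1 (hy i) M
  have hne : ∀ i j, i ≠ j → y i ≠ y j := by
    intro i j hij he
    obtain ⟨M, hM⟩ := hoff i j hij
    rw [← he] at hM
    exact hM (hdiag M i)
  refine ⟨b, y, hb, ?_, hdiag, hoff⟩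
  have hsum : y 0 + y 1 ≠ y 2 := by
    intro he
    -- Three linear conditions on `M` then force both `y 0` and `y 1` into its kernel.
    let g : V →ₗ[K₂] (Fin 3 → K₂) := LinearMap.pi
      ![(T.flip (b 1)).flip (y 0), (T.flip (b 2)).flip (y 0), (T.flip (b 0)).flip (y 1)]
    have hker : LinearMap.ker g ≠ ⊥ := by
      intro hbot
      have h1 := LinearMap.finrank_range_add_finrank_ker g
      have h2 := Submodule.finrank_le (LinearMap.range g)
      rw [Module.finrank_fin_fun] at h2
      rw [hbot, finrank_bot, h.dim] at h1
      omega
    obtain ⟨M, hM, hM0⟩ := Submodule.exists_mem_ne_zero_of_ne_bot hker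
    rw [LinearMap.mem_ker] at hM
    have e1 : T M (b 1) (y 0) = 0 := congrFun hM 0
    have e2 : T M (b 2) (y 0) = 0 := congrFun hM 1
    have e3 : T M (b 0) (y 1) = 0 := congrFun hM 2
    have e4 : T M (b 2) (y 1) = 0 := by
      have := hdiag M 2
      rwa [← he, map_add, e2, zero_add] at this
    have hspan : Submodule.span K₂ (Set.range b) = ⊤ :=
      hb.span_eq_top_of_card_eq_finrank (by rw [hX, Fintype.card_fin])
    have hz : ∀ z, (∀ i, T M (b i) z = 0) → z ∈ LinearMap.ker (T M).flip := by
      intro z hz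
      rw [LinearMap.mem_ker]
      refine LinearMap.ext_on_range hspan fun i => ?_
      simpa using hz i
    have h5 := h.kerY M hM0
    refine hne 0 1 (by decide) (eq_of_finrank_le_one (S := LinearMap.ker (T M).flip) (by omega)
      (hz _ fun i => ?_) (hz _ fun i => ?_) (hy0 0) (hy0 1))
    · fin_cases i
      exacts [hdiag M 0, e1, e2]
    · fin_cases i
      exacts [e3, hdiag M 1, e4]
  have hli := linearIndependent_triple (hy0 0) (hy0 1) (hy0 2) (hne 0 1 (by decide))
    (hne 0 2 (by decide)) (hne 1 2 (by decide)) hsum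
  convert hli using 1
  ext i
  fin_cases i <;> rfl

end Tensor

/-! ### Hollow three by three matrices -/

/-- If `x` and `y` are jointly injective on a four-dimensional space and the products of the
coordinates of `x M` and of `y M` always agree, then `x M` is never `(1, 1, 1)`: adding to such
an `M` a nonzero `N` with `x N = 0` would leave both products equal to one, hence
`y M = y (M + N) = (1, 1, 1)` and `y N = 0`. -/
theorem not_all_one {S : Type*} [AddCommGroup S] [Module K₂ S] (hS : Module.finrank K₂ S = 4)
    (x y : S →ₗ[K₂] (Fin 3 → K₂)) (hinj : ∀ M, x M = 0 → y M = 0 → M = 0)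
    (hdet : ∀ M, x M 0 * x M 1 * x M 2 + y M 0 * y M 1 * y M 2 = 0) (M : S) :
    ¬ (x M 0 = 1 ∧ x M 1 = 1 ∧ x M 2 = 1) := by
  rintro ⟨h0, h1, h2⟩
  have : Module.Finite K₂ S := Module.finite_of_finrank_pos (by omega)
  have hker : LinearMap.ker x ≠ ⊥ := by
    intro hbot
    have h1 := LinearMap.finrank_range_add_finrank_ker x
    have h2 := Submodule.finrank_le (LinearMap.range x)
    rw [Module.finrank_fin_fun] at h2
    rw [hbot, finrank_bot, hS] at h1
    omega
  obtain ⟨N, hN, hN0⟩ := Submodule.exists_mem_ne_zero_of_ne_bot hker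
  rw [LinearMap.mem_ker] at hN
  have hy : ∀ L, x L = x M → y L = 1 := by
    intro L hL
    have h3 := hdet L
    rw [hL, h0, h1, h2] at h3
    have key : ∀ a b c : K₂, 1 * 1 * 1 + a * b * c = 0 → a = 1 ∧ b = 1 ∧ c = 1 := by decide
    obtain ⟨e0, e1, e2⟩ := key _ _ _ h3
    ext i
    fin_cases i
    exacts [e0, e1, e2]
  have e1 := hy M rfl
  have e2 := hy (M + N) (by rw [map_add, hN, add_zero])
  rw [map_add, e1, add_eq_left] at e2
  exact hN0 (hinj N hN e2)

/-- A linear space of triples over the field with two elements that avoids `(1, 1, 1)` and on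
which no coordinate vanishes identically consists of triples of sum zero. -/
theorem sum_eq_zero_of_not_all_one {S : Type*} [AddCommGroup S] [Module K₂ S]
    (x : S →ₗ[K₂] (Fin 3 → K₂)) (hone : ∀ M, ¬ (x M 0 = 1 ∧ x M 1 = 1 ∧ x M 2 = 1))
    (hne : ∀ i, ∃ M, x M i ≠ 0) (M : S) : x M 0 + x M 1 + x M 2 = 0 := by
  by_contra hodd
  -- A triple of odd sum other than `(1, 1, 1)` is a unit vector.
  have hunit : ∀ N : S, x N 0 + x N 1 + x N 2 ≠ 0 →
      (x N 0 = 1 ∧ x N 1 = 0 ∧ x N 2 = 0) ∨ (x N 0 = 0 ∧ x N 1 = 1 ∧ x N 2 = 0) ∨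
        (x N 0 = 0 ∧ x N 1 = 0 ∧ x N 2 = 1) := by
    intro N hN
    have key : ∀ a b c : K₂, a + b + c ≠ 0 → ¬ (a = 1 ∧ b = 1 ∧ c = 1) →
        (a = 1 ∧ b = 0 ∧ c = 0) ∨ (a = 0 ∧ b = 1 ∧ c = 0) ∨ (a = 0 ∧ b = 0 ∧ c = 1) := by
      decide
    exact key _ _ _ hN (hone N)
  obtain ⟨A, hA⟩ := hne 0
  obtain ⟨B, hB⟩ := hne 1
  obtain ⟨C, hC⟩ := hne 2
  -- If `M` is the unit vector `i`, then among the two vectors with a nonzero coordinate `j`,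
  -- respectively `k`, and the sums of these two and `M`, one is `(1, 1, 1)`.
  have key : ∀ a b c a' b' c' : K₂, b ≠ 0 → c' ≠ 0 → ¬ (a = 1 ∧ b = 1 ∧ c = 1) →
      ¬ (a' = 1 ∧ b' = 1 ∧ c' = 1) → ¬ (1 + a = 1 ∧ b = 1 ∧ c = 1) →
      ¬ (1 + a' = 1 ∧ b' = 1 ∧ c' = 1) → ¬ (a + a' = 1 ∧ b + b' = 1 ∧ c + c' = 1) →
      ¬ (1 + (a + a') = 1 ∧ b + b' = 1 ∧ c + c' = 1) → False := by
    decide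
  rcases hunit M hodd with ⟨m0, m1, m2⟩ | ⟨m0, m1, m2⟩ | ⟨m0, m1, m2⟩
  · have h1 := hone (M + B)
    have h2 := hone (M + C)
    have h3 := hone (B + C)
    have h4 := hone (M + (B + C))
    simp only [map_add, Pi.add_apply, m0, m1, m2, zero_add] at h1 h2 h3 h4
    exact key _ _ _ _ _ _ hB hC (hone B) (hone C) h1 h2 h3 h4
  · have h1 := hone (M + A)
    have h2 := hone (M + C)
    have h3 := hone (A + C)
    have h4 := hone (M + (A + C))
    simp only [map_add, Pi.add_apply, m0, m1, m2, zero_add] at h1 h2 h3 h4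
    exact key _ _ _ _ _ _ hA hC (mt and_left_comm.1 (hone A)) (mt and_left_comm.1 (hone C))
      (mt and_left_comm.1 h1) (mt and_left_comm.1 h2) (mt and_left_comm.1 h3)
      (mt and_left_comm.1 h4)
  · have h1 := hone (M + A)
    have h2 := hone (M + B)
    have h3 := hone (A + B)
    have h4 := hone (M + (A + B))
    simp only [map_add, Pi.add_apply, m0, m1, m2, zero_add] at h1 h2 h3 h4
    exact key _ _ _ _ _ _ hA hB (mt and_rotate.1 (hone A)) (mt and_rotate.1 (hone B))
      (mt and_rotate.1 h1) (mt and_rotate.1 h2) (mt and_rotate.1 h3) (mt and_rotate.1 h4)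

theorem finrank_V3_le : Module.finrank K₂ V3 ≤ 4 := by
  let g : V3 →ₗ[K₂] (Fin 4 → K₂) :=
    { toFun := fun M => ![M.1 0 1, M.1 1 2, M.1 2 1, M.1 1 0]
      map_add' := by
        intro M N
        ext i
        fin_cases i <;> rfl
      map_smul' := by
        intro c M
        ext i
        fin_cases i <;> rfl }
  have hg : Function.Injective g := by
    rw [← LinearMap.ker_eq_bot, LinearMap.ker_eq_bot']
    rintro ⟨M, hd, h1, h2⟩ hM
    have e0 : M 0 1 = 0 := congrFun hM 0
    have e1 : M 1 2 = 0 := congrFun hM 1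
    have e2 : M 2 1 = 0 := congrFun hM 2
    have e3 : M 1 0 = 0 := congrFun hM 3
    rw [e0, e1, zero_add, zero_add] at h1
    rw [e2, e3, zero_add, zero_add] at h2
    ext i j
    fin_cases i <;> fin_cases j
    exacts [hd 0, e0, h2, e3, hd 1, e1, h1, e2, hd 2]
  have := LinearMap.finrank_le_finrank_of_injective hg
  rwa [Module.finrank_fin_fun] at this

/-- A four-dimensional space of singular hollow `3 × 3` matrices in which no entry off the
diagonal vanishes identically is `V3`. The determinant of a hollow matrix is the sum of the
products over the two cyclic triples of entries. -/
theorem eq_V3 (W : Submodule K₂ (Matrix (Fin 3) (Fin 3) K₂)) (hW : Module.finrank K₂ W = 4)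
    (hdiag : ∀ M ∈ W, ∀ i, M i i = 0) (hdet : ∀ M ∈ W, M.det = 0)
    (hoff : ∀ i j, i ≠ j → ∃ M ∈ W, M i j ≠ 0) : W = V3 := by
  let x : W →ₗ[K₂] (Fin 3 → K₂) :=
    { toFun := fun M => ![M.1 0 1, M.1 1 2, M.1 2 0]
      map_add' := by
        intro M N
        ext i
        fin_cases i <;> rfl
      map_smul' := by
        intro c M
        ext i
        fin_cases i <;> rfl }
  let y : W →ₗ[K₂] (Fin 3 → K₂) :=
    { toFun := fun M => ![M.1 2 1, M.1 1 0, M.1 0 2]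
      map_add' := by
        intro M N
        ext i
        fin_cases i <;> rfl
      map_smul' := by
        intro c M
        ext i
        fin_cases i <;> rfl }
  have hinj : ∀ M, x M = 0 → y M = 0 → M = 0 := by
    rintro ⟨M, hM⟩ hx hy
    ext i j
    fin_cases i <;> fin_cases j
    exacts [hdiag M hM 0, congrFun hx 0, congrFun hy 2, congrFun hy 1, hdiag M hM 1,
      congrFun hx 1, congrFun hx 2, congrFun hy 0, hdiag M hM 2]
  have hd : ∀ M, x M 0 * x M 1 * x M 2 + y M 0 * y M 1 * y M 2 = 0 := by
    rintro ⟨M, hM⟩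
    have h1 := hdet M hM
    rw [Matrix.det_fin_three, hdiag M hM 0, hdiag M hM 1, hdiag M hM 2] at h1
    change M 0 1 * M 1 2 * M 2 0 + M 2 1 * M 1 0 * M 0 2 = 0
    linear_combination h1
  have hx1 := not_all_one hW x y hinj hd
  have hy1 := not_all_one hW y x (fun M h1 h2 => hinj M h2 h1)
    (fun M => by rw [add_comm]; exact hd M)
  have hx := sum_eq_zero_of_not_all_one x hx1 (by
    intro i
    fin_cases i
    · obtain ⟨M, hM, h⟩ := hoff 0 1 (by decide)
      exact ⟨⟨M, hM⟩, h⟩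
    · obtain ⟨M, hM, h⟩ := hoff 1 2 (by decide)
      exact ⟨⟨M, hM⟩, h⟩
    · obtain ⟨M, hM, h⟩ := hoff 2 0 (by decide)
      exact ⟨⟨M, hM⟩, h⟩)
  have hy := sum_eq_zero_of_not_all_one y hy1 (by
    intro i
    fin_cases i
    · obtain ⟨M, hM, h⟩ := hoff 2 1 (by decide)
      exact ⟨⟨M, hM⟩, h⟩
    · obtain ⟨M, hM, h⟩ := hoff 1 0 (by decide)
      exact ⟨⟨M, hM⟩, h⟩
    · obtain ⟨M, hM, h⟩ := hoff 0 2 (by decide)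
      exact ⟨⟨M, hM⟩, h⟩)
  refine Submodule.eq_of_le_of_finrank_le (fun M hM => ?_) (by rw [hW]; exact finrank_V3_le)
  exact ⟨hdiag M hM, hx ⟨M, hM⟩, hy ⟨M, hM⟩⟩

/-! ### From primitive matrix spaces to trilinear forms -/

theorem exists_isUnit_mulVec_eq {n : ℕ} {u v : Fin n → K₂} (hu : u ≠ 0) (hv : v ≠ 0) :
    ∃ P : Matrix (Fin n) (Fin n) K₂, IsUnit P ∧ P *ᵥ u = v := by
  let e := (LinearEquiv.toSpanNonzeroSingleton K₂ _ u hu).symm ≪≫ₗ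
    LinearEquiv.toSpanNonzeroSingleton K₂ _ v hv
  obtain ⟨g, hg⟩ := Submodule.exists_linearEquiv_restrict_eq e
  refine ⟨LinearMap.toMatrix' g.toLinearMap, ?_, ?_⟩
  · refine IsUnit.of_mul_eq_one (LinearMap.toMatrix' g.symm.toLinearMap) ?_
    rw [← LinearMap.toMatrix'_comp]
    simp
  · rw [LinearMap.toMatrix'_mulVec]
    have h1 : e (LinearEquiv.toSpanNonzeroSingleton K₂ _ u hu 1) =
        LinearEquiv.toSpanNonzeroSingleton K₂ _ v hv 1 := by
      rw [LinearEquiv.trans_apply, LinearEquiv.symm_apply_apply]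
    have h2 := hg (LinearEquiv.toSpanNonzeroSingleton K₂ _ u hu 1)
    rw [h1] at h2
    simpa using h2.symm

theorem rank_dropRow_le {n p : ℕ} {N : Matrix (Fin n) (Fin p) K₂} (hN : N.rank ≤ 2)
    {x : Fin p → K₂} (hx : N *ᵥ x ≠ 0)
    (hdrop : ∀ i, (N *ᵥ x) (Fin.castLE (Nat.sub_le n 1) i) = 0) : (dropRow N).rank ≤ 1 := by
  let d : (Fin n → K₂) →ₗ[K₂] (Fin (n - 1) → K₂) :=
    LinearMap.funLeft K₂ K₂ (Fin.castLE (Nat.sub_le n 1))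
  have hcomp : (dropRow N).mulVecLin = d ∘ₗ N.mulVecLin := by
    ext i j
    simp [d, dropRow, LinearMap.funLeft]
  have h1 := LinearMap.finrank_range_add_finrank_ker
    (d.domRestrict (LinearMap.range N.mulVecLin))
  rw [LinearMap.range_domRestrict, ← LinearMap.range_comp, ← hcomp] at h1
  have h2 : 0 < Module.finrank K₂
      (LinearMap.ker (d.domRestrict (LinearMap.range N.mulVecLin))) := by
    rw [Module.finrank_pos_iff_exists_ne_zero]
    refine ⟨⟨⟨N *ᵥ x, ⟨x, rfl⟩⟩, ?_⟩, ?_⟩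
    · rw [LinearMap.mem_ker]
      ext i
      exact hdrop i
    · intro h
      exact hx (congrArg (fun z => z.1.1) h)
  rw [Matrix.rank] at hN ⊢
  omega

/-- If a nonzero vector lies in the column space of every nonzero matrix of a space of matrices
of rank two, then a row operation moving it to the last unit vector makes the deletion of the
last row lower all ranks. -/
theorem exists_dropRow {n p : ℕ} (V : Submodule K₂ (Matrix (Fin n) (Fin p) K₂))
    (hrank : ∀ M ∈ V, M ≠ 0 → M.rank = 2) {v : Fin n → K₂} (hv : v ≠ 0)
    (h : ∀ M ∈ V, M ≠ 0 → ∃ x, M *ᵥ x = v) :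
    ∃ P : Matrix (Fin n) (Fin n) K₂, IsUnit P ∧ ∀ M ∈ V, (dropRow (P * M)).rank ≤ 1 := by
  obtain ⟨i, -⟩ := Function.ne_iff.1 hv
  have hn : n - 1 < n := Nat.sub_lt i.pos one_pos
  let e : Fin n → K₂ := Pi.single ⟨n - 1, hn⟩ 1
  have he : e ≠ 0 := by simp [e]
  obtain ⟨P, hP, hPv⟩ := exists_isUnit_mulVec_eq hv he
  refine ⟨P, hP, fun M hM => ?_⟩
  rcases eq_or_ne M 0 with rfl | hM0
  · rw [Matrix.mul_zero]
    have : dropRow (0 : Matrix (Fin n) (Fin p) K₂) = 0 := rfl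
    rw [this, Matrix.rank_zero]
    omega
  obtain ⟨x, hx⟩ := h M hM hM0
  have hPM : (P * M) *ᵥ x = e := by rw [← Matrix.mulVec_mulVec, hx, hPv]
  refine rank_dropRow_le (x := x) ?_ (by rwa [hPM]) ?_
  · exact (Matrix.rank_mul_le_right P M).trans (hrank M hM hM0).le
  · intro j
    rw [hPM]
    refine Pi.single_eq_of_ne ?_ _
    intro hj
    have h1 := congrArg Fin.val hj
    have h2 := j.2
    simp only [Fin.val_castLE] at h1
    omega

/-- The map `M ↦ P * M * Q`. -/
def mulBoth {n p : ℕ} (P : Matrix (Fin n) (Fin n) K₂) (Q : Matrix (Fin p) (Fin p) K₂) :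
    Matrix (Fin n) (Fin p) K₂ →ₗ[K₂] Matrix (Fin n) (Fin p) K₂ where
  toFun M := P * M * Q
  map_add' M N := by rw [Matrix.mul_add, Matrix.add_mul]
  map_smul' c M := by simp

theorem mulBoth_apply {n p : ℕ} (P : Matrix (Fin n) (Fin n) K₂) (Q : Matrix (Fin p) (Fin p) K₂)
    (M : Matrix (Fin n) (Fin p) K₂) : mulBoth P Q M = P * M * Q := rfl

theorem matEquiv_map_mulBoth {n p : ℕ} (V : Submodule K₂ (Matrix (Fin n) (Fin p) K₂))
    {P : Matrix (Fin n) (Fin n) K₂} {Q : Matrix (Fin p) (Fin p) K₂} (hP : IsUnit P)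
    (hQ : IsUnit Q) : MatEquiv K₂ V (V.map (mulBoth P Q)) :=
  ⟨P, Q, hP, hQ, Submodule.map_coe _ _⟩

theorem urk_eq_two {n p : ℕ} {V : Submodule K₂ (Matrix (Fin n) (Fin p) K₂)}
    (hdim : Module.finrank K₂ V = 4) (hrank : ∀ M ∈ V, M ≠ 0 → M.rank = 2) : urk V = 2 := by
  have hV : Nontrivial V := Module.nontrivial_of_finrank_pos (R := K₂) (by omega)
  obtain ⟨⟨M, hM⟩, hM0⟩ := exists_ne (0 : V)
  have hM0 : M ≠ 0 := fun h => hM0 (Subtype.ext h)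
  refine IsGreatest.csSup_eq ⟨⟨M, hM, hrank M hM hM0⟩, ?_⟩
  rintro _ ⟨N, hN, rfl⟩
  rcases eq_or_ne N 0 with rfl | hN0
  · simp
  · exact (hrank N hN hN0).le

theorem Primitive.exists_not_mem_range {n p : ℕ} {V : Submodule K₂ (Matrix (Fin n) (Fin p) K₂)}
    (hprim : Primitive K₂ V) (hdim : Module.finrank K₂ V = 4)
    (hrank : ∀ M ∈ V, M ≠ 0 → M.rank = 2) {v : Fin n → K₂} (hv : v ≠ 0) :
    ∃ M ∈ V, M ≠ 0 ∧ ∀ x, M *ᵥ x ≠ v := by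
  by_contra! hcon
  obtain ⟨P, hP, hdrop⟩ := exists_dropRow V hrank hv hcon
  refine hprim.2 ⟨V.map (mulBoth P 1), matEquiv_map_mulBoth V hP isUnit_one, ?_⟩
  rintro _ ⟨M, hM, rfl⟩
  rw [urk_eq_two hdim hrank, mulBoth_apply, Matrix.mul_one]
  exact hdrop M hM

theorem Primitive.exists_not_mem_range_transpose {n p : ℕ}
    {V : Submodule K₂ (Matrix (Fin n) (Fin p) K₂)}
    (hprim : Primitive K₂ V) (hdim : Module.finrank K₂ V = 4)
    (hrank : ∀ M ∈ V, M ≠ 0 → M.rank = 2) {v : Fin p → K₂} (hv : v ≠ 0) :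
    ∃ M ∈ V, M ≠ 0 ∧ ∀ x, Mᵀ *ᵥ x ≠ v := by
  by_contra! hcon
  obtain ⟨P, hP, hdrop⟩ := exists_dropRow
    (V.map (Matrix.transposeLinearEquiv (Fin n) (Fin p) K₂ K₂).toLinearMap) (by
      rintro _ ⟨M, hM, rfl⟩ hM0
      change (Mᵀ).rank = 2
      rw [Matrix.rank_transpose]
      refine hrank M hM ?_
      rintro rfl
      exact hM0 (map_zero _)) hv (by
      rintro _ ⟨M, hM, rfl⟩ hM0
      refine hcon M hM ?_
      rintro rfl
      exact hM0 (map_zero _))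
  refine hprim.1.2 ⟨V.map (mulBoth 1 Pᵀ),
    matEquiv_map_mulBoth V isUnit_one ((Matrix.isUnit_transpose P).2 hP), ?_⟩
  rintro _ ⟨M, hM, rfl⟩
  rw [urk_eq_two hdim hrank]
  have h1 : dropCol (mulBoth 1 Pᵀ M) = (dropRow (P * Mᵀ))ᵀ := by
    rw [mulBoth_apply, Matrix.one_mul, ← Matrix.transpose_transpose M, ← Matrix.transpose_mul,
      Matrix.transpose_transpose]
    rfl
  rw [h1, Matrix.rank_transpose]
  exact hdrop _ ⟨M, hM, rfl⟩

/-- The trilinear form `(M, f, x) ↦ f ⬝ᵥ M *ᵥ x` of a space of matrices. -/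
def formOf {n p : ℕ} (V : Submodule K₂ (Matrix (Fin n) (Fin p) K₂)) :
    V →ₗ[K₂] (Fin n → K₂) →ₗ[K₂] (Fin p → K₂) →ₗ[K₂] K₂ :=
  (Matrix.toLinearMap₂' K₂).toLinearMap ∘ₗ V.subtype

theorem formOf_apply {n p : ℕ} (V : Submodule K₂ (Matrix (Fin n) (Fin p) K₂)) (M : V)
    (f : Fin n → K₂) (x : Fin p → K₂) : formOf V M f x = f ⬝ᵥ M.1 *ᵥ x :=
  Matrix.toLinearMap₂'_apply' M.1 f x

theorem formOf_apply_transpose {n p : ℕ} (V : Submodule K₂ (Matrix (Fin n) (Fin p) K₂)) (M : V)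
    (f : Fin n → K₂) (x : Fin p → K₂) : formOf V M f x = (M.1ᵀ *ᵥ f) ⬝ᵥ x := by
  rw [formOf_apply, Matrix.dotProduct_mulVec, Matrix.mulVec_transpose]

theorem finrank_ker_mulVecLin {n p : ℕ} {M : Matrix (Fin n) (Fin p) K₂} (hM : M.rank = 2) :
    Module.finrank K₂ (LinearMap.ker M.mulVecLin) + 2 = Module.finrank K₂ (Fin p → K₂) := by
  have := LinearMap.finrank_range_add_finrank_ker M.mulVecLin
  rw [Matrix.rank] at hM
  omega

theorem exists_dotProduct_eq {n : ℕ} {φ : (Fin n → K₂) →ₗ[K₂] K₂} (hφ : φ ≠ 0) :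
    ∃ v : Fin n → K₂, v ≠ 0 ∧ ∀ x, φ x = v ⬝ᵥ x := by
  have h1 : ∀ x, φ x = (fun i => φ (Pi.single i 1)) ⬝ᵥ x := by
    intro x
    conv_lhs => rw [LinearMap.pi_apply_eq_sum_univ φ x]
    refine Finset.sum_congr rfl fun i _ => ?_
    rw [smul_eq_mul, mul_comm]
    congr 2
    ext j
    simp [Pi.single_apply, eq_comm]
  refine ⟨_, ?_, h1⟩
  intro h0
  apply hφ
  ext i
  simpa using congrFun h0 i

theorem Primitive.good {n p : ℕ} {V : Submodule K₂ (Matrix (Fin n) (Fin p) K₂)}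
    (hprim : Primitive K₂ V) (hdim : Module.finrank K₂ V = 4)
    (hrank : ∀ M ∈ V, M ≠ 0 → M.rank = 2) : Good (formOf V) where
  dim := hdim
  kerX := by
    intro M hM
    have hM0 : M.1 ≠ 0 := fun h => hM (Subtype.ext h)
    rw [← finrank_ker_mulVecLin
      ((Matrix.rank_transpose M.1).trans (hrank M.1 M.2 hM0))]
    have hker : LinearMap.ker (formOf V M) = LinearMap.ker M.1ᵀ.mulVecLin := by
      ext f
      simp only [LinearMap.mem_ker, Matrix.mulVecLin_apply]
      rw [← dotProduct_eq_zero_iff]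
      simp [LinearMap.ext_iff, formOf_apply_transpose]
    rw [hker]
  kerY := by
    intro M hM
    have hM0 : M.1 ≠ 0 := fun h => hM (Subtype.ext h)
    rw [← finrank_ker_mulVecLin (hrank M.1 M.2 hM0)]
    have hker : LinearMap.ker (formOf V M).flip = LinearMap.ker M.1.mulVecLin := by
      ext f
      simp only [LinearMap.mem_ker, Matrix.mulVecLin_apply]
      rw [← dotProduct_eq_zero_iff]
      simp [LinearMap.ext_iff, formOf_apply, dotProduct_comm]
    rw [hker]
  primX := by
    intro φ hφ
    obtain ⟨v, hv, hvφ⟩ := exists_dotProduct_eq hφ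
    obtain ⟨M, hM, hM0, h⟩ := hprim.exists_not_mem_range_transpose hdim hrank hv
    refine ⟨⟨M, hM⟩, fun h0 => hM0 (congrArg Subtype.val h0), fun f hf => h f ?_⟩
    refine dotProduct_eq _ _ fun x => ?_
    rw [← hvφ, ← hf, formOf_apply_transpose]
  primY := by
    intro φ hφ
    obtain ⟨v, hv, hvφ⟩ := exists_dotProduct_eq hφ
    obtain ⟨M, hM, hM0, h⟩ := hprim.exists_not_mem_range hdim hrank hv
    refine ⟨⟨M, hM⟩, fun h0 => hM0 (congrArg Subtype.val h0), fun x hx => h x ?_⟩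
    refine dotProduct_eq _ _ fun f => ?_
    rw [← hvφ, ← hx, LinearMap.flip_apply, formOf_apply, dotProduct_comm]
  redX := by
    intro f hf
    by_contra! hcon
    apply hf
    have hle : Submodule.span K₂ {y : Fin n → K₂ | ∃ M ∈ V, ∃ x : Fin p → K₂, M.mulVec x = y} ≤
        LinearMap.ker (dotProductBilin K₂ K₂ f) := by
      rw [Submodule.span_le]
      rintro _ ⟨M, hM, x, rfl⟩
      have := LinearMap.congr_fun (hcon ⟨M, hM⟩) x
      rw [formOf_apply] at this
      exact this
    rw [hprim.1.1.2, top_le_iff, LinearMap.ker_eq_top] at hle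
    exact dotProduct_eq_zero f fun y => LinearMap.congr_fun hle y
  redY := by
    intro x hx
    by_contra! hcon
    refine hx (hprim.1.1.1 x fun M hM => dotProduct_eq_zero _ fun f => ?_)
    have := LinearMap.congr_fun (hcon ⟨M, hM⟩) f
    rw [LinearMap.flip_apply, formOf_apply] at this
    rw [dotProduct_comm]
    exact this

theorem primitive_four_dimensional_rank_two_space_equiv_V3 {n p : ℕ}
    (V : Submodule (ZMod 2) (Matrix (Fin n) (Fin p) (ZMod 2)))
    (hprim : Primitive (ZMod 2) V)
    (hdim : Module.finrank (ZMod 2) V = 4)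
    (hrank : ∀ M ∈ V, M ≠ 0 → M.rank = 2) :
    ∃ (hn : n = 3) (hp : p = 3), MatEquiv (ZMod 2) (reindexSub hn hp V) V3 := by
  have hgood := hprim.good hdim hrank
  have hX : Module.finrank K₂ (Fin n → K₂) = n := Module.finrank_fin_fun K₂
  have hY : Module.finrank K₂ (Fin p → K₂) = p := Module.finrank_fin_fun K₂
  have h1 := hgood.two_lt_finrank
  have h2 := hgood.swap.two_lt_finrank
  have h3 := hgood.finrank_le_four
  have h4 := hgood.swap.finrank_le_four
  rw [hX] at h1 h3
  rw [hY] at h2 h4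
  -- Both dimensions are three or four.
  have h5 : ¬ (n = 3 ∧ p = 4) := fun h => hgood.not_three_four (hX.trans h.1) (hY.trans h.2)
  have h6 : ¬ (p = 3 ∧ n = 4) := fun h =>
    hgood.swap.not_three_four (hY.trans h.1) (hX.trans h.2)
  have h7 : ¬ (n = 4 ∧ p = 4) := fun h => hgood.not_four_four (hX.trans h.1) (hY.trans h.2)
  obtain rfl : n = 3 := by omega
  obtain rfl : p = 3 := by omega
  refine ⟨rfl, rfl, ?_⟩
  have hre : reindexSub rfl rfl V = V := by
    ext M
    constructor
    · rintro ⟨N, hN, rfl⟩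
      exact hN
    · intro hM
      exact ⟨M, hM, rfl⟩
  rw [hre]
  obtain ⟨b, y, hb, hy, hdiag, hoff⟩ := hgood.hollow hX hY
  have hP : IsUnit (Matrix.of b) := Matrix.linearIndependent_rows_iff_isUnit.1 hb
  have hQ : IsUnit (Matrix.of y)ᵀ :=
    (Matrix.isUnit_transpose _).2 (Matrix.linearIndependent_rows_iff_isUnit.1 hy)
  have hentry : ∀ (M : V) i j,
      mulBoth (Matrix.of b) (Matrix.of y)ᵀ M.1 i j = formOf V M (b i) (y j) := by
    intro M i j
    rw [formOf_apply]
    change (Matrix.of b * M.1 * (Matrix.of y)ᵀ) i j = _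
    rw [Matrix.mul_assoc, Matrix.mul_apply_eq_vecMul, Matrix.vecMul_eq_sum]
    simp [dotProduct, Matrix.mul_apply, Matrix.mulVec]
  refine ⟨Matrix.of b, (Matrix.of y)ᵀ, hP, hQ, ?_⟩
  have hinj : Function.Injective (mulBoth (Matrix.of b) (Matrix.of y)ᵀ) := by
    intro M N hMN
    exact hP.mul_left_cancel (hQ.mul_right_cancel hMN)
  rw [← eq_V3 (V.map (mulBoth (Matrix.of b) (Matrix.of y)ᵀ)) ?_ ?_ ?_ ?_]
  · rfl
  · exact (Submodule.equivMapOfInjective _ hinj V).finrank_eq.symm.trans hdim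
  · rintro _ ⟨M, hM, rfl⟩ i
    exact (hentry ⟨M, hM⟩ i i).trans (hdiag _ i)
  · rintro _ ⟨M, hM, rfl⟩
    change (Matrix.of b * M * (Matrix.of y)ᵀ).det = 0
    have hdet : M.det = 0 := by
      by_contra hne
      have h8 := Matrix.rank_of_isUnit M
        ((Matrix.isUnit_iff_isUnit_det M).2 (isUnit_iff_ne_zero.2 hne))
      have h9 := hrank M hM (by rintro rfl; simp at hne)
      rw [h8, Fintype.card_fin] at h9
      omega
    rw [Matrix.det_mul, Matrix.det_mul, hdet, mul_zero, zero_mul]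
  · intro i j hij
    obtain ⟨M, hM⟩ := hoff i j hij
    exact ⟨_, ⟨M.1, M.2, rfl⟩, by rwa [hentry]⟩
end

section
/- Let n be an odd positive integer and F be any field. Then the space of n×n alternating matrices over F is a maximal element among the linear subspaces of n×n matrices over F consisting only of singular matrices; that is, every matrix of Mata_n(F) is singular, and any linear subspace of n×n matrices over F consisting only of singular matrices and containing Mata_n(F) equals Mata_n(F). -/
/-!
Singularity of an alternating matrix `M` of odd size: write `M = B - Bᵀ`. The generic matrix
`X - Xᵀ` over `ℤ[Xᵢⱼ]` satisfies `det = -det`, hence has determinant zero, and this specializes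
to every commutative ring, including those of characteristic two (`det_sub_transpose_of_odd`).

Maximality: let `N ∈ W` be non-alternating, so that the quadratic form `q(x) = xᵀ N x` is nonzero.
Congruences `N ↦ P N Pᵀ` preserve both singularity and alternation, so it suffices to find a basis
in which `N` becomes nonsingular after adding an alternating matrix.

* If the vectors with `q(x) ≠ 0` span `Fⁿ`, take a basis of such vectors. In that basis the diagonal
  of `N` has no zero, and adding an alternating matrix makes `N` lower triangular
  (`exists_det_ne_zero_of_diag`).
* Otherwise `q` vanishes off some hyperplane `ker l`. Fix `y` with `l(y) ≠ 0` and let `k` be the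
  linear form `k(x) = q(x + y) - q(x) - q(y)`. Then `k = -q` on `ker l`, so `q` vanishes on the
  hyperplane `ker k`, while `k(e) ≠ 0` whenever `q(e) ≠ 0` (`exists_isotropic_hyperplane`).
  In a basis made of such an `e` followed by a basis of `ker k`, the lower right block of `N` is
  alternating of even size `n - 1`. Adding an alternating matrix clears the rest of the first row
  and turns that block into the standard symplectic matrix, so the determinant becomes nonzero
  (`exists_det_ne_zero_of_block`).

The second case does occur, but only over the field with two elements; the argument does not need
this.
-/

open Matrix

/-- `Mata_n(F)`: the space of `n × n` alternating matrices (skew-symmetric matrices with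
zero diagonal) over `F`. -/
def MataN (F : Type*) [Field F] (n : ℕ) : Submodule F (Matrix (Fin n) (Fin n) F) where
  carrier := {M | Mᵀ = -M ∧ ∀ i : Fin n, M i i = 0}
  add_mem' := by
    rintro M N ⟨hM1, hM2⟩ ⟨hN1, hN2⟩
    refine ⟨by rw [Matrix.transpose_add, hM1, hN1]; abel, fun i => by
      simp [Matrix.add_apply, hM2 i, hN2 i]⟩
  zero_mem' := ⟨by simp, fun i => rfl⟩
  smul_mem' := by
    rintro c M ⟨hM1, hM2⟩
    exact ⟨by rw [Matrix.transpose_smul, hM1, smul_neg], fun i => by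
      simp [Matrix.smul_apply, hM2 i]⟩

theorem det_sub_transpose_of_odd {R : Type*} [CommRing R] {n : ℕ} (hn : Odd n)
    (B : Matrix (Fin n) (Fin n) R) : (B - Bᵀ).det = 0 := by
  let X := mvPolynomialX (Fin n) (Fin n) ℤ
  have hX : (X - Xᵀ).det = 0 := by
    have h : (X - Xᵀ).det = -(X - Xᵀ).det := by
      conv_lhs => rw [← det_transpose, transpose_sub, transpose_transpose, ← neg_sub, det_neg]
      simp [hn.neg_one_pow]
    exact self_eq_neg.mp h
  let f : MvPolynomial (Fin n × Fin n) ℤ →+* R :=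
    MvPolynomial.eval₂Hom (Int.castRingHom R) fun p => B p.1 p.2
  have hf : f.mapMatrix (X - Xᵀ) = B - Bᵀ := by
    ext i j
    simp [f, X, mvPolynomialX]
  rw [← hf, ← RingHom.map_det, hX, map_zero]

theorem exists_eq_sub_transpose {F : Type*} [Field F] {n : ℕ}
    {M : Matrix (Fin n) (Fin n) F} (hM : M ∈ MataN F n) : ∃ B, M = B - Bᵀ := by
  obtain ⟨h1, h2⟩ := hM
  -- `B` is the strictly upper triangular part of `M`
  refine ⟨of fun i j => if i < j then M i j else 0, ?_⟩
  ext i j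
  have hij : M j i = -M i j := congrFun (congrFun h1 i) j
  rcases lt_trichotomy i j with h | h | h
  · simp [h, h.not_gt]
  · subst h
    simp [h2]
  · simp [h, h.not_gt, hij]

theorem sub_transpose_mem_MataN {F : Type*} [Field F] {n : ℕ}
    (B : Matrix (Fin n) (Fin n) F) : B - Bᵀ ∈ MataN F n :=
  ⟨by simp, fun i => by simp⟩

theorem det_eq_zero_of_mem_MataN {F : Type*} [Field F] {n : ℕ} (hn : Odd n)
    {M : Matrix (Fin n) (Fin n) F} (hM : M ∈ MataN F n) : M.det = 0 := by
  obtain ⟨B, rfl⟩ := exists_eq_sub_transpose hM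
  exact det_sub_transpose_of_odd hn B

theorem conj_mem_MataN {F : Type*} [Field F] {n : ℕ} (Q : Matrix (Fin n) (Fin n) F)
    {A : Matrix (Fin n) (Fin n) F} (hA : A ∈ MataN F n) : Q * A * Qᵀ ∈ MataN F n := by
  obtain ⟨B, rfl⟩ := exists_eq_sub_transpose hA
  have h : Q * (B - Bᵀ) * Qᵀ = Q * B * Qᵀ - (Q * B * Qᵀ)ᵀ := by
    simp [transpose_mul, Matrix.mul_assoc, Matrix.mul_sub, Matrix.sub_mul]
  rw [h]
  exact sub_transpose_mem_MataN _

/-- Solving the problem for a matrix congruent to `N` solves it for `N`. -/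
theorem exists_det_ne_zero_of_conj {F : Type*} [Field F] {n : ℕ}
    (N P : Matrix (Fin n) (Fin n) F) (hP : IsUnit P)
    (h : ∃ A ∈ MataN F n, (P * N * Pᵀ + A).det ≠ 0) :
    ∃ A ∈ MataN F n, (N + A).det ≠ 0 := by
  obtain ⟨A, hA, hdet⟩ := h
  have hd : IsUnit P.det := (isUnit_iff_isUnit_det P).mp hP
  have hd' : IsUnit Pᵀ.det := by rwa [det_transpose]
  refine ⟨P⁻¹ * A * (P⁻¹)ᵀ, conj_mem_MataN _ hA, fun h0 => hdet ?_⟩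
  have e : P * N * Pᵀ + A = P * (N + P⁻¹ * A * (P⁻¹)ᵀ) * Pᵀ := by
    rw [Matrix.mul_add, Matrix.add_mul, transpose_nonsing_inv]
    congr 1
    rw [Matrix.mul_assoc, Matrix.mul_assoc, Matrix.mul_assoc, nonsing_inv_mul _ hd',
      Matrix.mul_one, mul_nonsing_inv_cancel_left _ _ hd]
  rw [e, det_mul, det_mul, h0]
  simp

/-- Adding a suitable alternating matrix makes `M` lower triangular with unchanged diagonal. -/
theorem exists_det_ne_zero_of_diag {F : Type*} [Field F] {n : ℕ}
    (M : Matrix (Fin n) (Fin n) F) (hM : ∀ i, M i i ≠ 0) :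
    ∃ A ∈ MataN F n, (M + A).det ≠ 0 := by
  refine ⟨of fun i j => if i < j then -M i j else if j < i then M j i else 0,
    ⟨?_, fun i => by simp⟩, ?_⟩
  · ext i j
    rcases lt_trichotomy i j with h | h | h
    · simp [h, h.not_gt]
    · simp [h]
    · simp [h, h.not_gt]
  · rw [det_of_isLowerTriangular]
    · simpa [Finset.prod_eq_zero_iff] using hM
    · intro i j hij
      have hij : i < j := hij
      simp [hij]

/-- In even size the standard symplectic matrix is alternating and nonsingular. -/
theorem exists_mem_MataN_det_ne_zero (F : Type*) [Field F] {m : ℕ} (hm : Even m) :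
    ∃ J ∈ MataN F m, J.det ≠ 0 := by
  obtain ⟨k, rfl⟩ := hm
  refine ⟨reindex finSumFinEquiv finSumFinEquiv (Matrix.J (Fin k) F), ⟨?_, fun i => ?_⟩, ?_⟩
  · rw [transpose_reindex, J_transpose]
    rfl
  · obtain ⟨i, rfl⟩ := finSumFinEquiv.surjective i
    rw [reindex_apply, submatrix_apply, Equiv.symm_apply_apply]
    rcases i with i | i <;> simp [Matrix.J]
  · rw [det_reindex_self]
    exact (isUnit_det_J (Fin k) F).ne_zero

theorem exists_det_ne_zero_of_block {F : Type*} [Field F] {m : ℕ} (hm : Even m)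
    (M : Matrix (Fin (m + 1)) (Fin (m + 1)) F) (h0 : M 0 0 ≠ 0)
    (hM : M.submatrix Fin.succ Fin.succ ∈ MataN F m) :
    ∃ A ∈ MataN F (m + 1), (M + A).det ≠ 0 := by
  obtain ⟨J, hJ, hdet⟩ := exists_mem_MataN_det_ne_zero F hm
  obtain ⟨hD1, hD2⟩ := Submodule.sub_mem _ hJ hM
  generalize hD : J - M.submatrix Fin.succ Fin.succ = D at hD1 hD2
  let A : Matrix (Fin (m + 1)) (Fin (m + 1)) F :=
    of (Fin.cons (Fin.cons 0 fun j => -M 0 j.succ) fun i => Fin.cons (M 0 i.succ) (D i))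
  refine ⟨A, ⟨?_, ?_⟩, ?_⟩
  · ext i j
    refine Fin.cases ?_ (fun i => ?_) i <;> refine Fin.cases ?_ (fun j => ?_) j
    · simp [A]
    · simp [A]
    · simp [A]
    · simpa [A] using congrFun (congrFun hD1 i) j
  · intro i
    refine Fin.cases ?_ (fun i => ?_) i
    · simp [A]
    · simpa [A] using hD2 i
  · have hsub : (M + A).submatrix Fin.succ Fin.succ = J := by
      ext i j
      simp [A, ← hD]
    rw [det_succ_row_zero, Fin.sum_univ_succ]
    have hs : (M + A).submatrix Fin.succ (Fin.succAbove 0) = J := by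
      simpa [Fin.succAbove_zero] using hsub
    rw [hs]
    simp [A, h0, hdet]

theorem conj_apply {F : Type*} [Field F] {n : ℕ} (N : Matrix (Fin n) (Fin n) F)
    (v : Fin n → Fin n → F) (i j : Fin n) :
    (of v * N * (of v)ᵀ) i j = v i ⬝ᵥ N *ᵥ v j := by
  rw [dotProduct_mulVec]
  rfl

theorem isUnit_of_linearIndependent {F : Type*} [Field F] {n : ℕ} {v : Fin n → Fin n → F}
    (hv : LinearIndependent F v) : IsUnit (of v) :=
  linearIndependent_rows_iff_isUnit.mp hv

theorem mem_MataN_of_forall {F : Type*} [Field F] {n : ℕ} {N : Matrix (Fin n) (Fin n) F}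
    (h : ∀ x, x ⬝ᵥ N *ᵥ x = 0) : N ∈ MataN F n := by
  have hd : ∀ i, N i i = 0 := fun i => by simpa using h (Pi.single i 1)
  refine ⟨?_, hd⟩
  ext i j
  have := h (Pi.single i 1 + Pi.single j 1)
  simp [mulVec_add, add_dotProduct, dotProduct_add, hd] at this
  simp only [transpose_apply, Matrix.neg_apply]
  linear_combination this

/-- If the vectors on which `x ↦ xᵀ N x` is nonzero do not span, this form vanishes on a
hyperplane `ker k` that misses all of them. -/
theorem exists_isotropic_hyperplane {F : Type*} [Field F] {n : ℕ} (N : Matrix (Fin n) (Fin n) F)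
    (hS : Submodule.span F {x : Fin n → F | x ⬝ᵥ N *ᵥ x ≠ 0} ≠ ⊤) :
    ∃ k : (Fin n → F) →ₗ[F] F, (∀ x, k x = 0 → x ⬝ᵥ N *ᵥ x = 0) ∧
      ∀ x, x ⬝ᵥ N *ᵥ x ≠ 0 → k x ≠ 0 := by
  obtain ⟨l, hl, hle⟩ := Submodule.exists_le_ker_of_lt_top _ (lt_top_iff_ne_top.mpr hS)
  have hoff : ∀ x, l x ≠ 0 → x ⬝ᵥ N *ᵥ x = 0 := fun x hx => by
    by_contra h
    exact hx (hle (Submodule.subset_span h))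
  have hin : ∀ x, x ⬝ᵥ N *ᵥ x ≠ 0 → l x = 0 := fun x hx => by
    by_contra h
    exact hx (hoff x h)
  obtain ⟨y, hy⟩ : ∃ y, l y ≠ 0 := by
    by_contra! h
    exact hl (LinearMap.ext h)
  have hqy := hoff y hy
  let k : (Fin n → F) →ₗ[F] F :=
    { toFun := fun x => x ⬝ᵥ N *ᵥ y + y ⬝ᵥ N *ᵥ x
      map_add' := fun a b => by
        simp only [mulVec_add, add_dotProduct, dotProduct_add]
        ring
      map_smul' := fun c a => by
        simp only [mulVec_smul, smul_dotProduct, dotProduct_smul, smul_eq_mul, RingHom.id_apply]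
        ring }
  have hk : ∀ x, k x = x ⬝ᵥ N *ᵥ y + y ⬝ᵥ N *ᵥ x := fun x => rfl
  have hker : ∀ x, l x = 0 → k x = -(x ⬝ᵥ N *ᵥ x) := fun x hx => by
    have := hoff (x + y) (by simpa [hx] using hy)
    simp only [mulVec_add, add_dotProduct, dotProduct_add] at this
    rw [hk]
    linear_combination this - hqy
  refine ⟨k, fun z hz => ?_, fun x hx => ?_⟩
  · by_contra hne
    have hlz := hin z hne
    exact hne (by rw [← neg_eq_zero, ← hker z hlz, hz])
  · rw [hker x (hin x hx)]
    exact neg_ne_zero.mpr hx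

theorem exists_det_ne_zero_of_notMem {F : Type*} [Field F] {n : ℕ} (hn : Odd n)
    {N : Matrix (Fin n) (Fin n) F} (hN : N ∉ MataN F n) :
    ∃ A ∈ MataN F n, (N + A).det ≠ 0 := by
  by_cases hS : Submodule.span F {x : Fin n → F | x ⬝ᵥ N *ᵥ x ≠ 0} = ⊤
  · let b := Module.Basis.ofSpan hS.ge
    have hb : ∀ i, b i ⬝ᵥ N *ᵥ b i ≠ 0 := fun i =>
      Module.Basis.ofSpan_subset hS.ge ⟨i, rfl⟩
    have : Fintype _ := FiniteDimensional.fintypeBasisIndex b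
    let c := b.reindex (Fintype.equivFinOfCardEq
      (by rw [← Module.finrank_eq_card_basis b, Module.finrank_fin_fun]))
    refine exists_det_ne_zero_of_conj N (of c) (isUnit_of_linearIndependent c.linearIndependent)
      (exists_det_ne_zero_of_diag _ fun i => ?_)
    rw [conj_apply]
    simpa [c] using hb _
  · obtain ⟨k, hk0, hk1⟩ := exists_isotropic_hyperplane N hS
    obtain ⟨e, he⟩ : ∃ e, e ⬝ᵥ N *ᵥ e ≠ 0 := by
      by_contra! h
      exact hN (mem_MataN_of_forall h)
    obtain ⟨m, rfl⟩ : ∃ m, n = m + 1 := ⟨n - 1, by have := hn.pos; omega⟩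
    have hm : Even m := by
      rcases Nat.even_or_odd m with h | h
      · exact h
      · exact absurd hn (Nat.not_odd_iff_even.mpr h.add_one)
    have hrank : Module.finrank F (LinearMap.ker k) = m := by
      have h1 := LinearMap.finrank_range_add_finrank_ker k
      have h2 : LinearMap.range k = ⊤ := LinearMap.range_eq_top.mpr
        (LinearMap.surjective fun h => hk1 e he (by rw [h]; rfl))
      rw [h2, finrank_top, Module.finrank_self, Module.finrank_fin_fun] at h1
      omega
    let b := Module.finBasisOfFinrankEq F (LinearMap.ker k) hrank
    have hb : LinearIndependent F fun i => (b i : Fin (m + 1) → F) :=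
      b.linearIndependent.map' (LinearMap.ker k).subtype (Submodule.ker_subtype _)
    let v : Fin (m + 1) → Fin (m + 1) → F := Fin.cons e fun i => (b i : Fin (m + 1) → F)
    have hv : LinearIndependent F v := by
      refine linearIndependent_finCons.mpr ⟨hb, fun h => hk1 e he ?_⟩
      refine (Submodule.span_le.mpr ?_ : _ ≤ LinearMap.ker k) h
      rintro _ ⟨i, rfl⟩
      exact (b i).2
    refine exists_det_ne_zero_of_conj N (of v) (isUnit_of_linearIndependent hv)
      (exists_det_ne_zero_of_block hm _ ?_ ?_)
    · rw [conj_apply]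
      exact he
    · have hq : ∀ x ∈ LinearMap.ker k, x ⬝ᵥ N *ᵥ x = 0 := fun x hx => hk0 x hx
      refine ⟨?_, fun i => ?_⟩
      · ext i j
        have h := hq _ (Submodule.add_mem _ (b i).2 (b j).2)
        simp only [mulVec_add, add_dotProduct, dotProduct_add, hq _ (b i).2, hq _ (b j).2] at h
        simp only [transpose_apply, Matrix.neg_apply, submatrix_apply, conj_apply, v, Fin.cons_succ]
        linear_combination h
      · simp only [submatrix_apply, conj_apply, v, Fin.cons_succ]
        exact hq _ (b i).2

theorem mataN_maximal_singular_subspace {F : Type*} [Field F] {n : ℕ} (hn : Odd n) :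
    (∀ M ∈ MataN F n, M.det = 0) ∧
    ∀ W : Submodule F (Matrix (Fin n) (Fin n) F),
      (∀ M ∈ W, M.det = 0) → MataN F n ≤ W → W = MataN F n := by
  refine ⟨fun M hM => det_eq_zero_of_mem_MataN hn hM, fun W hW hle => le_antisymm ?_ hle⟩
  intro N hN
  by_contra hNA
  obtain ⟨A, hA, hdet⟩ := exists_det_ne_zero_of_notMem hn hNA
  exact hdet (hW _ (W.add_mem hN (hle hA)))
end
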